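/- arXiv:1706.09675 — 2 statements merged into one kernel-verified Lean document; each statement's English description precedes it below -/
import Mathlib

section
/- Let R = k[x_1,…,x_n] be a polynomial ring over a field k, let J and H be homogeneous ideals in R, let f ∈ R be a linear form that is a non-zerodivisor on R/J, and set I = J + fH. Then depth R/I equals depth R/(J+H) or depth R/I equals depth R/J − 1; equivalently, depth R/I ∈ {depth R/(I:f), depth R/(I,f)}. -/
open MvPolynomial

/-- The depth of the `R`-module `M` with respect to the ideal `J`: the supremum of
lengths of `M`-regular sequences consisting of elements of `J`. -/
noncomputable def idealDepth {R : Type*} [CommRing R] (J : Ideal R)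
    (M : Type*) [AddCommGroup M] [Module R M] : ℕ :=
  sSup {d : ℕ | ∃ rs : List R, rs.length = d ∧ (∀ r ∈ rs, r ∈ J) ∧
    RingTheory.Sequence.IsRegular M rs}

/-- The irrelevant maximal homogeneous ideal `(x₁, …, xₙ)` of the polynomial ring. -/
noncomputable def mxIdeal (k : Type*) [Field k] (n : ℕ) : Ideal (MvPolynomial (Fin n) k) :=
  Ideal.span (Set.range MvPolynomial.X)

/-- `depth R/I`, the depth of the quotient module with respect to the maximal
homogeneous ideal. -/
noncomputable def pdepth {k : Type*} [Field k] {n : ℕ}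
    (I : Ideal (MvPolynomial (Fin n) k)) : ℕ :=
  idealDepth (mxIdeal k n) (MvPolynomial (Fin n) k ⧸ I)

/-- `p` is homogeneous of degree `d ∈ ℤ` (where `0` is homogeneous of any degree). -/
def HomogOfDeg {k : Type*} [Field k] {n : ℕ} (p : MvPolynomial (Fin n) k) (d : ℤ) : Prop :=
  p = 0 ∨ ∃ m : ℕ, (m : ℤ) = d ∧ p.IsHomogeneous m

/-- A finite graded free resolution of `R/I`: free modules `Fᵢ = ⊕_j R(-D i j)` (of rank
`b i`, zero for `i > len`), differentials given by matrices `A i : Fᵢ₊₁ → Fᵢ` whose entries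
are homogeneous of the appropriate degrees, and an augmentation `F₀ → R/I` given by the
homogeneous column `v`, the whole complex being exact. -/
structure GradedFreeRes {k : Type*} [Field k] {n : ℕ}
    (I : Ideal (MvPolynomial (Fin n) k)) where
  len : ℕ
  b : ℕ → ℕ
  hb : ∀ i : ℕ, len < i → b i = 0
  D : (i : ℕ) → Fin (b i) → ℤ
  A : (i : ℕ) → Matrix (Fin (b i)) (Fin (b (i+1))) (MvPolynomial (Fin n) k)
  v : Fin (b 0) → MvPolynomial (Fin n) k
  hv : ∀ r, HomogOfDeg (v r) (D 0 r)
  hA : ∀ (i : ℕ) r c, HomogOfDeg (A i r c) (D (i+1) c - D i r)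
  haug : Function.Surjective
    (fun w : Fin (b 0) → MvPolynomial (Fin n) k => Ideal.Quotient.mk I (∑ r, w r * v r))
  hex0 : Function.Exact ((A 0).mulVec)
    (fun w : Fin (b 0) → MvPolynomial (Fin n) k => Ideal.Quotient.mk I (∑ r, w r * v r))
  hex : ∀ i : ℕ, Function.Exact ((A (i+1)).mulVec) ((A i).mulVec)

/-- The Castelnuovo–Mumford regularity `reg R/I`: the least `r` such that some finite
graded free resolution of `R/I` has all its `i`-th twists `≤ r + i`; equivalently (via the
minimal free resolution) `reg R/I = max { j - i : β_{i,j}(R/I) ≠ 0 }`. -/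
noncomputable def regQuot {k : Type*} [Field k] {n : ℕ}
    (I : Ideal (MvPolynomial (Fin n) k)) : ℤ :=
  sInf {r : ℤ | ∃ F : GradedFreeRes I, ∀ (i : ℕ) (j : Fin (F.b i)), F.D i j - (i : ℤ) ≤ r}

/-- The regularity of a (nonzero) homogeneous ideal: `reg I = reg R/I + 1`. -/
noncomputable def regIdeal {k : Type*} [Field k] {n : ℕ}
    (I : Ideal (MvPolynomial (Fin n) k)) : ℤ :=
  regQuot I + 1

/-- An ideal is homogeneous if it is generated by homogeneous polynomials. -/
def IsHomogeneousIdeal {k : Type*} [Field k] {n : ℕ}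
    (I : Ideal (MvPolynomial (Fin n) k)) : Prop :=
  ∃ T : Set (MvPolynomial (Fin n) k), (∀ p ∈ T, ∃ d : ℕ, p.IsHomogeneous d) ∧ I = Ideal.span T

/-- A monomial ideal: an ideal generated by monomials. -/
def IsMonomialIdeal {k : Type*} [Field k] {n : ℕ}
    (I : Ideal (MvPolynomial (Fin n) k)) : Prop :=
  ∃ T : Set (Fin n →₀ ℕ), I = Ideal.span ((fun m => monomial m (1 : k)) '' T)

/-!
Depth is detected by `Ext`: by Rees, `depth M` is the least `i` with `Ext^i(R/𝔪, M) ≠ 0`. Put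
`M = R/J` and `N = (J + H)/J`, so that `R/(J + H) = M/N` and `R/(J + fH) = M/fN`. Since `f ∈ 𝔪`
kills `R/𝔪`, the injection `f : N → M` is zero on `Ext^i(R/𝔪, -)`, and its long exact sequence falls
apart into short ones, giving `depth M/fN + 1 = min (depth N) (depth M + 1)`. The sequence
`0 → N → M → M/N → 0` gives `depth N = depth M/N + 1` if `depth M/N < depth M`, and
`depth N ≥ depth M` otherwise, with equality unless `depth M/N = depth M`.
-/

section ENat

lemma le_of_forall_natCast_succ_le {a b : ℕ∞}
    (h : ∀ d : ℕ, ((d + 1 : ℕ) : ℕ∞) ≤ a → ((d + 1 : ℕ) : ℕ∞) ≤ b) : a ≤ b :=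
  ENat.forall_natCast_le_iff_le.1 fun d ↦ d.casesOn (fun _ ↦ zero_le) h

lemma eq_or_add_one_eq_of_min_le {a b q d : ℕ∞} (ha : min b (q + 1) ≤ a) (hb : min a q ≤ b)
    (hq : min a (b + 1) ≤ q + 1) (hd : d + 1 = min a (b + 1)) : d = q ∨ d + 1 = b := by
  obtain hqb | hbq := lt_or_ge q b
  · have hqb' : q + 1 ≤ b := Order.add_one_le_of_lt hqb
    have ha' : a = q + 1 := le_antisymm (by simpa [hqb.not_ge] using hq) (by simpa [hqb'] using ha)
    left
    simpa [ha', hqb.le] using hd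
  · have hba : b ≤ a := by simpa [hbq.trans le_self_add] using ha
    obtain rfl | hba := hba.eq_or_lt
    · right
      rw [hd, min_eq_left le_self_add]
    · obtain rfl : q = b := le_antisymm (by simpa [hba.not_ge] using hb) hbq
      left
      simpa [Order.add_one_le_of_lt hba] using hd

end ENat

section ExtGrade

open CategoryTheory Abelian

universe w v u

variable {C : Type u} [Category.{v} C] [Abelian C] [HasExt.{w} C]

/-- The grade of `Y` relative to `X`: the least `i` with `Ext X Y i ≠ 0`, and `⊤` if there is none.
Taking `X = R ⧸ 𝔪` turns the long exact `Ext` sequence into statements about depth. -/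
noncomputable def extGrade (X Y : C) : ℕ∞ :=
  ⨅ (i : ℕ) (_ : Nontrivial (Ext X Y i)), (i : ℕ∞)

lemma natCast_le_extGrade_iff {X Y : C} {d : ℕ} :
    (d : ℕ∞) ≤ extGrade X Y ↔ ∀ i < d, Subsingleton (Ext X Y i) := by
  simp only [extGrade, le_iInf_iff, Nat.cast_le, ← not_nontrivial_iff_subsingleton]
  exact forall_congr' fun i ↦ ⟨fun h hi hX ↦ (h hX).not_gt hi, fun h hX ↦ not_lt.1 fun hi ↦ h hi hX⟩

lemma extGrade_eq_top {X Y : C} (h : ∀ i, Subsingleton (Ext X Y i)) : extGrade X Y = ⊤ :=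
  ENat.eq_top_iff_forall_ge.2 fun _ ↦ natCast_le_extGrade_iff.2 fun i _ ↦ h i

lemma natCast_succ_le_extGrade_add_one_iff {X Y : C} {d : ℕ} :
    ((d + 1 : ℕ) : ℕ∞) ≤ extGrade X Y + 1 ↔ ∀ i < d, Subsingleton (Ext X Y i) := by
  simp [natCast_le_extGrade_iff]

section LongExactSequence

variable {X : C} {S : ShortComplex C}

lemma subsingleton_ext_X₁_zero (hS : S.ShortExact) (h₂ : Subsingleton (Ext X S.X₂ 0)) :
    Subsingleton (Ext X S.X₁ 0) :=
  have := hS.mono_f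
  ⟨fun _ _ ↦ Ext.postcomp_mk₀_injective_of_mono X S.f (h₂.elim _ _)⟩

lemma subsingleton_ext_X₁ (hS : S.ShortExact) {i : ℕ} (h₃ : Subsingleton (Ext X S.X₃ i))
    (h₂ : Subsingleton (Ext X S.X₂ (i + 1))) : Subsingleton (Ext X S.X₁ (i + 1)) := by
  refine subsingleton_of_forall_eq 0 fun x ↦ ?_
  obtain ⟨y, rfl⟩ := Ext.covariant_sequence_exact₁ X hS x (Subsingleton.elim _ _) rfl
  rw [Subsingleton.elim y 0, Ext.zero_comp]

lemma subsingleton_ext_X₂ (hS : S.ShortExact) {i : ℕ} (h₁ : Subsingleton (Ext X S.X₁ i))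
    (h₃ : Subsingleton (Ext X S.X₃ i)) : Subsingleton (Ext X S.X₂ i) := by
  refine subsingleton_of_forall_eq 0 fun x ↦ ?_
  obtain ⟨y, rfl⟩ := Ext.covariant_sequence_exact₂ X hS x (Subsingleton.elim _ _)
  rw [Subsingleton.elim y 0, Ext.zero_comp]

lemma subsingleton_ext_X₃ (hS : S.ShortExact) {i : ℕ} (h₂ : Subsingleton (Ext X S.X₂ i))
    (h₁ : Subsingleton (Ext X S.X₁ (i + 1))) : Subsingleton (Ext X S.X₃ i) := by
  refine subsingleton_of_forall_eq 0 fun x ↦ ?_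
  obtain ⟨y, rfl⟩ := Ext.covariant_sequence_exact₃ X hS x rfl (Subsingleton.elim _ _)
  rw [Subsingleton.elim y 0, Ext.zero_comp]

variable (X)

lemma min_extGrade_le_extGrade_X₂ (hS : S.ShortExact) :
    min (extGrade X S.X₁) (extGrade X S.X₃) ≤ extGrade X S.X₂ := by
  refine ENat.forall_natCast_le_iff_le.1 fun d hd ↦ ?_
  simp only [le_min_iff, natCast_le_extGrade_iff] at hd ⊢
  exact fun i hi ↦ subsingleton_ext_X₂ hS (hd.1 i hi) (hd.2 i hi)

lemma min_extGrade_le_extGrade_X₁ (hS : S.ShortExact) :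
    min (extGrade X S.X₂) (extGrade X S.X₃ + 1) ≤ extGrade X S.X₁ := by
  refine le_of_forall_natCast_succ_le fun d hd ↦ ?_
  rw [le_min_iff, natCast_le_extGrade_iff, natCast_succ_le_extGrade_add_one_iff] at hd
  refine natCast_le_extGrade_iff.2 fun i hi ↦ ?_
  cases i with
  | zero => exact subsingleton_ext_X₁_zero hS (hd.1 0 hi)
  | succ i => exact subsingleton_ext_X₁ hS (hd.2 i (by lia)) (hd.1 (i + 1) hi)

lemma min_extGrade_le_extGrade_X₃_add_one (hS : S.ShortExact) :
    min (extGrade X S.X₁) (extGrade X S.X₂ + 1) ≤ extGrade X S.X₃ + 1 := by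
  refine le_of_forall_natCast_succ_le fun d hd ↦ ?_
  rw [le_min_iff, natCast_le_extGrade_iff, natCast_succ_le_extGrade_add_one_iff] at hd
  exact natCast_succ_le_extGrade_add_one_iff.2 fun i hi ↦
    subsingleton_ext_X₃ hS (hd.2 i hi) (hd.1 (i + 1) (by lia))

lemma extGrade_X₃_add_one_eq_min (hS : S.ShortExact)
    (hf : ∀ (i : ℕ) (x : Ext X S.X₁ i), x.comp (Ext.mk₀ S.f) (add_zero i) = 0) :
    extGrade X S.X₃ + 1 = min (extGrade X S.X₁) (extGrade X S.X₂ + 1) := by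
  refine le_antisymm (le_of_forall_natCast_succ_le fun d hd ↦ ?_)
    (min_extGrade_le_extGrade_X₃_add_one X hS)
  rw [natCast_succ_le_extGrade_add_one_iff] at hd
  rw [le_min_iff, natCast_le_extGrade_iff, natCast_succ_le_extGrade_add_one_iff]
  refine ⟨fun i hi ↦ subsingleton_of_forall_eq 0 fun x ↦ ?_,
    fun i hi ↦ subsingleton_of_forall_eq 0 fun x ↦ ?_⟩
  · cases i with
    | zero =>
      have := hS.mono_f
      exact Ext.postcomp_mk₀_injective_of_mono X S.f ((hf 0 x).trans (map_zero _).symm)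
    | succ i =>
      have := hd i (by lia)
      obtain ⟨y, rfl⟩ := Ext.covariant_sequence_exact₁ X hS x (hf _ x) rfl
      rw [Subsingleton.elim y 0, Ext.zero_comp]
  · have := hd i hi
    obtain ⟨y, rfl⟩ := Ext.covariant_sequence_exact₂ X hS x (Subsingleton.elim _ _)
    exact hf i y

end LongExactSequence

section Linear

variable {R : Type*} [Ring R] [Linear R C] {X Y Z : C} {r : R}

lemma smul_ext_eq_zero_left (hr : r • 𝟙 X = 0) {i : ℕ} (x : Ext X Y i) : r • x = 0 := by
  rw [← Ext.mk₀_id_comp x, ← Ext.smul_comp, ← Ext.mk₀_smul, hr, Ext.mk₀_zero, Ext.zero_comp]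

lemma smul_ext_eq_zero_right (hr : r • 𝟙 Y = 0) {i : ℕ} (x : Ext X Y i) : r • x = 0 := by
  rw [← Ext.comp_mk₀_id x, ← Ext.comp_smul, ← Ext.mk₀_smul, hr, Ext.mk₀_zero, Ext.comp_zero]

lemma ext_comp_mk₀_smul_eq_zero (hr : r • 𝟙 X = 0) (f : Y ⟶ Z) {i : ℕ} (x : Ext X Y i) :
    x.comp (Ext.mk₀ (r • f)) (add_zero i) = 0 := by
  rw [Ext.mk₀_smul, Ext.comp_smul, ← Ext.smul_comp, smul_ext_eq_zero_left hr, Ext.zero_comp]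

theorem extGrade_cokernel_smul_eq_or_add_one_eq {A B Q D : C} {f : A ⟶ B} {g : B ⟶ Q}
    {w : f ≫ g = 0} {g' : B ⟶ D} {w' : (r • f) ≫ g' = 0} (hr : r • 𝟙 X = 0)
    (hf : (ShortComplex.mk f g w).ShortExact) (hrf : (ShortComplex.mk (r • f) g' w').ShortExact) :
    extGrade X D = extGrade X Q ∨ extGrade X D + 1 = extGrade X B := by
  have hA := min_extGrade_le_extGrade_X₁ X hf
  have hB := min_extGrade_le_extGrade_X₂ X hf
  have hQ := min_extGrade_le_extGrade_X₃_add_one X hf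
  have hD := extGrade_X₃_add_one_eq_min X hrf fun _ ↦ ext_comp_mk₀_smul_eq_zero hr f
  exact eq_or_add_one_eq_of_min_le hA hB hQ hD

end Linear

end ExtGrade

section Rees

open CategoryTheory Abelian RingTheory.Sequence

universe v u

variable {R : Type u} [CommRing R]

section Module

variable {M : Type*} [AddCommGroup M] [Module R M]

lemma smul_top_quotient_eq_top_iff {I : Ideal R} {N : Submodule R M} :
    I • (⊤ : Submodule R (M ⧸ N)) = ⊤ ↔ I • (⊤ : Submodule R M) ⊔ N = ⊤ := by
  rw [← (Submodule.comap_injective_of_surjective N.mkQ_surjective).eq_iff,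
    Submodule.comap_smul_top_of_surjective I N.mkQ N.mkQ_surjective, Submodule.ker_mkQ,
    Submodule.comap_top]

lemma isSMulRegular_map_mkQ_iff {N P : Submodule R M} {r : R} :
    IsSMulRegular (P.map N.mkQ) r ↔ ∀ x ∈ P, r • x ∈ N → x ∈ N := by
  simp_rw [isSMulRegular_submodule_iff_right_eq_zero_of_smul, Submodule.mem_map,
    forall_exists_index, and_imp, forall_apply_eq_imp_iff₂, ← map_smul, Submodule.mkQ_apply,
    Submodule.Quotient.mk_eq_zero]

lemma length_le_height_of_isWeaklyRegular [IsNoetherianRing R] [Module.Finite R M]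
    {p : PrimeSpectrum R} (hp : p ∈ Module.support R M) {rs : List R}
    (hrs : IsWeaklyRegular M rs) (hrp : ∀ r ∈ rs, r ∈ p.asIdeal) :
    (rs.length : ℕ∞) ≤ p.asIdeal.height := by
  let Rₚ := Localization.AtPrime p.asIdeal
  let Mₚ := LocalizedModule p.asIdeal.primeCompl M
  let rsₚ := rs.map (algebraMap R Rₚ)
  have : Nontrivial Mₚ := Module.mem_support_iff.1 hp
  have hreg : IsRegular Mₚ rsₚ := hrs.isRegular_of_isLocalizedModule_of_mem Rₚ p.asIdeal
    (LocalizedModule.mkLinearMap p.asIdeal.primeCompl M) hrp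
  have : Nontrivial (Mₚ ⧸ Ideal.ofList rsₚ • (⊤ : Submodule Rₚ Mₚ)) :=
    Submodule.Quotient.nontrivial_iff.2 hreg.top_ne_smul.symm
  have : Nonempty (Module.support Rₚ (Mₚ ⧸ Ideal.ofList rsₚ • (⊤ : Submodule Rₚ Mₚ))) :=
    Module.nonempty_support_of_nontrivial.to_subtype
  have hle : ((rs.length : ℕ∞) : WithBot ℕ∞) ≤ (p.asIdeal.height : WithBot ℕ∞) := calc
    ((rs.length : ℕ∞) : WithBot ℕ∞) = rsₚ.length := by simp [rsₚ]
    _ ≤ Module.supportDim Rₚ (Mₚ ⧸ Ideal.ofList rsₚ • (⊤ : Submodule Rₚ Mₚ)) + rsₚ.length :=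
      le_add_of_nonneg_left Order.krullDim_nonneg
    _ = Module.supportDim Rₚ Mₚ :=
      Module.supportDim_add_length_eq_supportDim_of_isRegular rsₚ hreg
    _ ≤ ringKrullDim Rₚ := Module.supportDim_le_ringKrullDim Rₚ Mₚ
    _ = p.asIdeal.height := IsLocalization.AtPrime.ringKrullDim_eq_height p.asIdeal Rₚ
  exact_mod_cast hle

lemma exists_mem_support_of_smul_top_ne_top [Module.Finite R M] {I : Ideal R}
    (hI : I • (⊤ : Submodule R M) ≠ ⊤) : ∃ p ∈ Module.support R M, I ≤ p.asIdeal := by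
  have := Submodule.Quotient.nontrivial_iff.2 hI
  obtain ⟨p, hp⟩ : (Module.support R (M ⧸ I • (⊤ : Submodule R M))).Nonempty :=
    Module.nonempty_support_of_nontrivial
  rw [Module.support_quotient] at hp
  exact ⟨p, hp⟩

lemma bddAbove_length_isRegular [IsNoetherianRing R] [Module.Finite R M] {I : Ideal R}
    (hI : I • (⊤ : Submodule R M) ≠ ⊤) :
    BddAbove {d : ℕ | ∃ rs : List R, rs.length = d ∧ (∀ r ∈ rs, r ∈ I) ∧ IsRegular M rs} := by
  obtain ⟨p, hp, hIp⟩ := exists_mem_support_of_smul_top_ne_top hI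
  refine ⟨p.asIdeal.height.toNat, ?_⟩
  rintro _ ⟨rs, rfl, hrs, hreg⟩
  rw [← Nat.cast_le (α := ℕ∞), ENat.natCast_toNat Ideal.height_ne_top_of_isPrime]
  exact length_le_height_of_isWeaklyRegular hp hreg.toIsWeaklyRegular fun r hr ↦ hIp (hrs r hr)

lemma idealDepth_congr {M' : Type*} [AddCommGroup M'] [Module R M'] (e : M ≃ₗ[R] M')
    (I : Ideal R) : idealDepth I M = idealDepth I M' := by
  simp only [idealDepth, e.isRegular_congr]

end Module

variable [Small.{v} R] {M : Type v} [AddCommGroup M] [Module R M] {I : Ideal R}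

lemma smul_id_shrink_quotient_eq_zero {r : R} (hr : r ∈ I) :
    r • 𝟙 (ModuleCat.of R (Shrink.{v} (R ⧸ I))) = 0 := by
  have hann : r ∈ Module.annihilator R (Shrink.{v} (R ⧸ I)) := by
    rwa [(Shrink.linearEquiv R (R ⧸ I)).annihilator_eq, Ideal.annihilator_quotient]
  exact ModuleCat.hom_ext (LinearMap.ext (Module.mem_annihilator.1 hann))

lemma extGrade_eq_top_of_smul_top_eq_top [Module.Finite R M]
    (hI : I • (⊤ : Submodule R M) = ⊤) :
    extGrade (ModuleCat.of R (Shrink.{v} (R ⧸ I))) (ModuleCat.of R M) = ⊤ := by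
  obtain ⟨r, hr, hrM⟩ := Submodule.exists_sub_one_mem_and_smul_eq_zero_of_fg_of_le_smul I
    (⊤ : Submodule R M) Module.Finite.fg_top hI.ge
  refine extGrade_eq_top fun i ↦ subsingleton_of_forall_eq 0 fun x ↦ ?_
  have hr₁ : (r - 1) • x = 0 := smul_ext_eq_zero_left (smul_id_shrink_quotient_eq_zero hr) x
  have hr₂ : r • x = 0 := smul_ext_eq_zero_right (by ext m; exact hrM m trivial) x
  simpa [sub_smul, hr₂] using hr₁

variable [IsNoetherianRing R] [Module.Finite R M]

lemma natCast_le_extGrade_iff_exists_isRegular (hI : I • (⊤ : Submodule R M) ≠ ⊤) {d : ℕ} :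
    (d : ℕ∞) ≤ extGrade (ModuleCat.of R (Shrink.{v} (R ⧸ I))) (ModuleCat.of R M) ↔
      ∃ rs : List R, rs.length = d ∧ (∀ r ∈ rs, r ∈ I) ∧ IsRegular M rs :=
  natCast_le_extGrade_iff.trans <|
    (ModuleCat.exists_isRegular_tfae I d (ModuleCat.of R M) hI.lt_top).out 1 3

theorem natCast_idealDepth_eq_extGrade (hI : I • (⊤ : Submodule R M) ≠ ⊤) :
    (idealDepth I M : ℕ∞) =
      extGrade (ModuleCat.of R (Shrink.{v} (R ⧸ I))) (ModuleCat.of R M) := by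
  have hbdd := bddAbove_length_isRegular hI
  refine le_antisymm ?_ (ENat.forall_natCast_le_iff_le.1 fun d hd ↦ ?_)
  · exact (natCast_le_extGrade_iff_exists_isRegular hI).2 <| Nat.sSup_mem
      ⟨0, (natCast_le_extGrade_iff_exists_isRegular hI).1 (by simp)⟩ hbdd
  · exact Nat.cast_le.2 <| le_csSup hbdd ((natCast_le_extGrade_iff_exists_isRegular hI).1 hd)

end Rees

section QuotientBySMul

open CategoryTheory Abelian
open scoped Pointwise

universe v u

variable {R : Type u} [CommRing R] [Small.{v} R] {M : Type v} [AddCommGroup M] [Module R M]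

lemma extGrade_quotient_smul_eq_or_add_one_eq {X : ModuleCat.{v} R} {f : R}
    (hX : f • 𝟙 X = 0) {N : Submodule R M} (hf : IsSMulRegular N f) :
    extGrade X (ModuleCat.of R (M ⧸ f • N)) = extGrade X (ModuleCat.of R (M ⧸ N)) ∨
      extGrade X (ModuleCat.of R (M ⧸ f • N)) + 1 = extGrade X (ModuleCat.of R M) := by
  have hN : Function.Exact N.subtype N.mkQ := LinearMap.exact_subtype_mkQ N
  have hfN : Function.Exact (f • N.subtype) (f • N).mkQ := fun x ↦ by
    simp [Submodule.mem_smul_pointwise_iff_exists]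
  have hinj : Function.Injective (f • N.subtype) := N.injective_subtype.comp hf
  exact extGrade_cokernel_smul_eq_or_add_one_eq (r := f)
    (w := ModuleCat.hom_ext hN.linearMap_comp_eq_zero)
    (w' := ModuleCat.hom_ext hfN.linearMap_comp_eq_zero) hX
    (ModuleCat.shortComplex_shortExact
      (.mk (ModuleCat.ofHom N.subtype) (ModuleCat.ofHom N.mkQ) _)
      hN N.injective_subtype N.mkQ_surjective)
    (ModuleCat.shortComplex_shortExact
      (.mk (f • ModuleCat.ofHom N.subtype) (ModuleCat.ofHom (f • N).mkQ) _)
      hfN hinj (f • N).mkQ_surjective)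

theorem idealDepth_quotient_smul_eq_or_add_one_eq [IsNoetherianRing R] [Module.Finite R M]
    {𝔪 : Ideal R} (h𝔪 : 𝔪 • (⊤ : Submodule R M) ≠ ⊤) {f : R} (hf𝔪 : f ∈ 𝔪)
    {N : Submodule R M} (hf : IsSMulRegular N f) :
    idealDepth 𝔪 (M ⧸ f • N) = idealDepth 𝔪 (M ⧸ N) ∨
      idealDepth 𝔪 (M ⧸ f • N) + 1 = idealDepth 𝔪 M := by
  have hfN : f • N ≤ 𝔪 • (⊤ : Submodule R M) := by
    rintro _ ⟨x, -, rfl⟩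
    exact Submodule.smul_mem_smul hf𝔪 trivial
  have h𝔪fN : 𝔪 • (⊤ : Submodule R (M ⧸ f • N)) ≠ ⊤ :=
    smul_top_quotient_eq_top_iff.not.2 (by rwa [sup_eq_left.2 hfN])
  have key := extGrade_quotient_smul_eq_or_add_one_eq (smul_id_shrink_quotient_eq_zero hf𝔪) hf
  rw [← natCast_idealDepth_eq_extGrade h𝔪fN, ← natCast_idealDepth_eq_extGrade h𝔪] at key
  by_cases h𝔪N : 𝔪 • (⊤ : Submodule R (M ⧸ N)) = ⊤
  · rw [extGrade_eq_top_of_smul_top_eq_top h𝔪N] at key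
    exact .inr (by exact_mod_cast key.resolve_left (ENat.natCast_ne_top _))
  · rw [← natCast_idealDepth_eq_extGrade h𝔪N] at key
    exact_mod_cast key

end QuotientBySMul

open scoped Pointwise in
theorem depth_modulo_linear_form_general {R : Type*} [CommRing R] [IsNoetherianRing R]
    (𝔪 J H : Ideal R) (hJ : 𝔪 ⊔ J ≠ ⊤) (f : R) (hf : f ∈ 𝔪)
    (hnzd : ∀ g ∈ H, f * g ∈ J → g ∈ J) :
    idealDepth 𝔪 (R ⧸ (J + Ideal.span {f} * H)) = idealDepth 𝔪 (R ⧸ (J + H)) ∨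
      idealDepth 𝔪 (R ⧸ (J + Ideal.span {f} * H)) + 1 = idealDepth 𝔪 (R ⧸ J) := by
  have h_quotient (K : Ideal R) :
      idealDepth 𝔪 (R ⧸ (J + K)) = idealDepth 𝔪 ((R ⧸ J) ⧸ Submodule.map J.mkQ K) :=
    (idealDepth_congr (Submodule.quotientQuotientEquivQuotientSup J K) 𝔪).symm
  have h_smul : Submodule.map J.mkQ (Ideal.span {f} * H) = f • Submodule.map J.mkQ H := by
    rw [← smul_eq_mul, Submodule.ideal_span_singleton_smul, Submodule.map_pointwise_smul]
  have h_top : 𝔪 • (⊤ : Submodule R (R ⧸ J)) ≠ ⊤ :=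
    smul_top_quotient_eq_top_iff.not.2 (by rwa [smul_eq_mul, Ideal.mul_top])
  rw [h_quotient, h_quotient, h_smul]
  exact idealDepth_quotient_smul_eq_or_add_one_eq h_top hf (isSMulRegular_map_mkQ_iff.2 hnzd)

section Polynomial

variable {k : Type*} [Field k] {n : ℕ}

lemma mem_mxIdeal_iff {p : MvPolynomial (Fin n) k} : p ∈ mxIdeal k n ↔ p.coeff 0 = 0 := by
  change p ∈ idealOfVars (Fin n) k ↔ _
  simpa [Nat.lt_one_iff, Finsupp.degree_eq_zero_iff] using mem_pow_idealOfVars_iff' 1 p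

lemma mxIdeal_ne_top : mxIdeal k n ≠ ⊤ := by
  simp [Ideal.ne_top_iff_one, mem_mxIdeal_iff]

lemma mem_mxIdeal_of_isHomogeneous {p : MvPolynomial (Fin n) k} {d : ℕ} (hp : p.IsHomogeneous d)
    (hd : d ≠ 0) : p ∈ mxIdeal k n :=
  mem_mxIdeal_iff.2 (hp.coeff_eq_zero (by simpa using hd.symm))

lemma isUnit_of_isHomogeneous_of_notMem_mxIdeal {p : MvPolynomial (Fin n) k} {d : ℕ}
    (hp : p.IsHomogeneous d) (hpm : p ∉ mxIdeal k n) : IsUnit p := by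
  obtain rfl : d = 0 := by_contra fun hd ↦ hpm (mem_mxIdeal_of_isHomogeneous hp hd)
  have hC : p = C (p.coeff 0) := totalDegree_eq_zero_iff_eq_C.1 (Nat.le_zero.1 hp.totalDegree_le)
  rw [hC]
  exact (isUnit_iff_ne_zero.2 (mem_mxIdeal_iff.not.1 hpm)).map C

lemma IsHomogeneousIdeal.le_mxIdeal {J : Ideal (MvPolynomial (Fin n) k)}
    (hJ : IsHomogeneousIdeal J) (hJtop : J ≠ ⊤) : J ≤ mxIdeal k n := by
  obtain ⟨T, hT, rfl⟩ := hJ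
  refine Ideal.span_le.2 fun p hp ↦ by_contra fun hpm ↦ hJtop ?_
  obtain ⟨d, hd⟩ := hT p hp
  exact Ideal.eq_top_of_isUnit_mem _ (Ideal.subset_span hp)
    (isUnit_of_isHomogeneous_of_notMem_mxIdeal hd hpm)

lemma IsHomogeneousIdeal.mxIdeal_sup_ne_top {J : Ideal (MvPolynomial (Fin n) k)}
    (hJ : IsHomogeneousIdeal J) (hJtop : J ≠ ⊤) : mxIdeal k n ⊔ J ≠ ⊤ := by
  rw [sup_eq_left.2 (hJ.le_mxIdeal hJtop)]
  exact mxIdeal_ne_top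

end Polynomial

/-- **Theorem (depth modulo a linear form).** Let `I = J + fH` where `J, H` are homogeneous
ideals and `f` is a linear form which is a non-zerodivisor on `R/J`. Then
`depth R/I ∈ {depth R/(J+H), depth R/J - 1}` (equivalently,
`depth R/I ∈ {depth R/(I:f), depth R/(I,f)}`). -/
theorem depth_modulo_linear_form {k : Type*} [Field k] {n : ℕ}
    (J H : Ideal (MvPolynomial (Fin n) k))
    (hJ : IsHomogeneousIdeal J) (hH : IsHomogeneousIdeal H)
    (f : MvPolynomial (Fin n) k) (hf1 : f.IsHomogeneous 1) (hf0 : f ≠ 0)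
    (hnzd : ∀ g : MvPolynomial (Fin n) k, f * g ∈ J → g ∈ J)
    (I : Ideal (MvPolynomial (Fin n) k)) (hI : I = J + Ideal.span {f} * H) :
    pdepth I = pdepth (J + H) ∨ pdepth I = pdepth J - 1 := by
  obtain rfl | hJtop := eq_or_ne J ⊤
  · simp [hI]
  exact hI ▸ (depth_modulo_linear_form_general (mxIdeal k n) J H (hJ.mxIdeal_sup_ne_top hJtop) f
    (mem_mxIdeal_of_isHomogeneous hf1 one_ne_zero) fun g _ ↦ hnzd g).imp_right Nat.eq_sub_of_add_eq
end

section
/- Let R = k[x_1,…,x_n] be a polynomial ring over a field k, let J and H be homogeneous ideals in R, let f ∈ R be a linear form that is a non-zerodivisor on R/J, and set I = J + fH. Then reg R/I equals reg R/(J+H) + 1 or reg R/I equals reg R/J; equivalently, reg R/I ∈ {reg R/(I:f) + 1, reg R/(I,f)}. -/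
open MvPolynomial

/-!
The regularity of a graded module is read off its Koszul homology `H_c(x; M)_j = Tor_c(M, k)_j`:
long exact sequences of Koszul homology bound it by the twists of any graded free resolution, while
each twist of the minimal resolution is the degree of a nonzero homology class.

Multiplication by `f` gives an exact sequence `0 → R/(J+H)(-1) → R/I → R/(J,f) → 0`. The linear
form `f` lies in the ideal of the variables, so it acts null-homotopically on Koszul complexes;
since it is regular on `R/J`, this yields `reg R/J ≤ reg R/I` and `reg R/(J,f) ≤ reg R/J`. If
`reg R/I` differs from `reg R/J`, it is therefore larger, and then the long exact sequence forces it
to be `reg R/(J+H) + 1`.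
-/

section Koszul

open Finset

variable {ι R M N : Type*} [LinearOrder ι] [CommRing R] [AddCommGroup M] [Module R M]
  [AddCommGroup N] [Module R N]

/-- The sign by which `e_t ∧ e_S` differs from the ordered product `e_{S ∪ {t}}`. -/
def koszulSign (t : ι) (S : Finset ι) : ℤ := (-1) ^ #{s ∈ S | s < t}

lemma koszulSign_mul_self (t : ι) (S : Finset ι) : koszulSign t S * koszulSign t S = 1 := by
  rw [koszulSign, ← mul_pow, neg_one_mul, neg_neg, one_pow]

lemma koszulSign_insert_of_lt {s t : ι} {S : Finset ι} (hs : s ∉ S) (h : s < t) :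
    koszulSign t (insert s S) = -koszulSign t S := by
  rw [koszulSign, filter_insert, if_pos h, card_insert_of_notMem (by simp [hs]), pow_succ,
    mul_neg_one, koszulSign]

lemma koszulSign_insert_of_le {s t : ι} {S : Finset ι} (h : t ≤ s) :
    koszulSign t (insert s S) = koszulSign t S := by
  rw [koszulSign, filter_insert, if_neg h.not_gt, koszulSign]

lemma koszulSign_mul_insert {s t : ι} {S : Finset ι} (hst : s ≠ t) (hs : s ∉ S) (ht : t ∉ S) :
    koszulSign s S * koszulSign t (insert s S) = -(koszulSign t S * koszulSign s (insert t S)) := by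
  rcases hst.lt_or_gt with h | h
  · rw [koszulSign_insert_of_lt hs h, koszulSign_insert_of_le h.le]; ring
  · rw [koszulSign_insert_of_lt ht h, koszulSign_insert_of_le h.le]; ring

lemma koszulSign_insert_mul {s t : ι} {S : Finset ι} (hst : s ≠ t) (hs : s ∉ S) (ht : t ∉ S) :
    koszulSign s (insert t S) * koszulSign t (insert s S) = -(koszulSign t S * koszulSign s S) := by
  rcases hst.lt_or_gt with h | h
  · rw [koszulSign_insert_of_lt hs h, koszulSign_insert_of_le h.le]; ring
  · rw [koszulSign_insert_of_lt ht h, koszulSign_insert_of_le h.le]; ring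

/-- Contraction of the exterior chain `∑_S z S ⊗ e_S` with the dual basis vector of `e_t`.
Elements of `M ⊗ ⋀ R^ι` are encoded as functions `Finset ι → M` throughout. -/
def koszulContract (t : ι) : (Finset ι → M) →+ (Finset ι → M) where
  toFun z S := if t ∈ S then 0 else koszulSign t S • z (insert t S)
  map_zero' := by ext; simp
  map_add' z w := by ext; simp only [Pi.add_apply]; split_ifs <;> simp

/-- Exterior multiplication by `e_t`. -/
def koszulWedge (t : ι) : (Finset ι → M) →+ (Finset ι → M) where
  toFun z S := if t ∈ S then koszulSign t (S.erase t) • z (S.erase t) else 0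
  map_zero' := by ext; simp
  map_add' z w := by ext; simp only [Pi.add_apply]; split_ifs <;> simp

lemma koszulContract_apply (t : ι) (z : Finset ι → M) (S : Finset ι) :
    koszulContract t z S = if t ∈ S then 0 else koszulSign t S • z (insert t S) := rfl

lemma koszulWedge_apply (t : ι) (z : Finset ι → M) (S : Finset ι) :
    koszulWedge t z S = if t ∈ S then koszulSign t (S.erase t) • z (S.erase t) else 0 := rfl

lemma koszulContract_self (t : ι) (z : Finset ι → M) :
    koszulContract t (koszulContract t z) = 0 := by
  ext S
  simp [koszulContract_apply]

lemma koszulContract_anticomm {s t : ι} (hst : s ≠ t) (z : Finset ι → M) :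
    koszulContract s (koszulContract t z) = -koszulContract t (koszulContract s z) := by
  ext S
  simp only [koszulContract_apply, Pi.neg_apply, mem_insert, hst, hst.symm, false_or]
  by_cases hs : s ∈ S
  · simp [hs]
  by_cases ht : t ∈ S
  · simp [ht]
  simp only [hs, ht, if_false, smul_smul, koszulSign_mul_insert hst hs ht, neg_smul,
    insert_comm s t]

lemma koszulContract_wedge_self (t : ι) (z : Finset ι → M) :
    koszulContract t (koszulWedge t z) + koszulWedge t (koszulContract t z) = z := by
  ext S
  by_cases ht : t ∈ S
  · simp [koszulContract_apply, koszulWedge_apply, ht, smul_smul, koszulSign_mul_self]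
  · simp [koszulContract_apply, koszulWedge_apply, ht, smul_smul, koszulSign_mul_self]

lemma koszulContract_wedge_of_ne {s t : ι} (hst : s ≠ t) (z : Finset ι → M) :
    koszulContract s (koszulWedge t z) + koszulWedge t (koszulContract s z) = 0 := by
  ext S
  by_cases hs : s ∈ S
  · simp [koszulContract_apply, koszulWedge_apply, hs, hst]
  by_cases ht : t ∈ S
  · obtain ⟨T, htT, rfl⟩ : ∃ T, t ∉ T ∧ insert t T = S := ⟨S.erase t, by simp, insert_erase ht⟩
    have hsT : s ∉ T := fun h => hs (mem_insert_of_mem h)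
    have htT' : t ∉ insert s T := by simp [hst.symm, htT]
    simp [koszulContract_apply, koszulWedge_apply, hsT, hst, hst.symm, htT, smul_smul,
      insert_comm s t, erase_insert htT', koszulSign_insert_mul hst hsT htT]
  · simp [koszulContract_apply, koszulWedge_apply, ht, hst.symm]

lemma koszulContract_comp (φ : M →+ N) (t : ι) (z : Finset ι → M) :
    koszulContract t (φ ∘ z) = φ ∘ koszulContract t z := by
  ext S
  simp only [koszulContract_apply, Function.comp_apply]
  split_ifs <;> simp

lemma koszulContract_smul (a : R) (t : ι) (z : Finset ι → M) :
    koszulContract t (a • z) = a • koszulContract t z :=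
  koszulContract_comp (LinearMap.lsmul R M a).toAddMonoidHom t z

lemma koszulWedge_smul (a : R) (t : ι) (z : Finset ι → M) :
    koszulWedge t (a • z) = a • koszulWedge t z := by
  ext S
  simp only [koszulWedge_apply, Pi.smul_apply, smul_ite, smul_zero, smul_comm a]

variable [Fintype ι] (x : ι → R)

/-- The differential of the Koszul complex `M ⊗ K(x)`. -/
def koszulD : (Finset ι → M) →+ (Finset ι → M) := ∑ t, x t • koszulContract t

lemma koszulD_apply (z : Finset ι → M) : koszulD x z = ∑ t, x t • koszulContract t z := by
  simp [koszulD]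

lemma koszulD_comp (φ : M →ₗ[R] N) (z : Finset ι → M) :
    koszulD x (φ ∘ z) = φ ∘ koszulD x z := by
  ext S
  have h (t : ι) : koszulContract t (φ ∘ z) = φ ∘ koszulContract t z :=
    koszulContract_comp φ.toAddMonoidHom t z
  simp [koszulD_apply, h]

lemma koszulD_smul (a : R) (z : Finset ι → M) : koszulD x (a • z) = a • koszulD x z :=
  koszulD_comp x (LinearMap.lsmul R M a) z

theorem koszulD_koszulD (z : Finset ι → M) : koszulD x (koszulD x z) = 0 := by
  have expand : koszulD x (koszulD x z) =
      ∑ q : ι × ι, (x q.1 * x q.2) • koszulContract q.1 (koszulContract q.2 z) := by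
    simp only [koszulD_apply, map_sum, koszulContract_smul, smul_smul,
      Fintype.sum_prod_type_right]
  rw [expand]
  refine sum_involution (fun q _ => q.swap) ?_ ?_ (by simp) (by simp)
  · rintro ⟨s, t⟩ -
    obtain rfl | hst := eq_or_ne s t
    · simp [koszulContract_self]
    · simp [koszulContract_anticomm hst, mul_comm (x t)]
  · rintro ⟨s, t⟩ - hne heq
    obtain rfl : t = s := congrArg Prod.fst heq
    simp [koszulContract_self] at hne

/-- Multiplication by `x t` is null-homotopic on the Koszul complex. -/
theorem koszulD_wedge_add (t : ι) (z : Finset ι → M) :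
    koszulD x (koszulWedge t z) + koszulWedge t (koszulD x z) = x t • z := by
  simp only [koszulD_apply, map_sum, koszulWedge_smul, ← sum_add_distrib, ← smul_add]
  rw [sum_eq_single t, koszulContract_wedge_self]
  · intro s _ hst
    rw [koszulContract_wedge_of_ne hst, smul_zero]
  · simp

end Koszul

section GradedKoszul

open Finset

variable {ι R A B C : Type*} [CommRing R] [AddCommGroup A] [Module R A]
  [AddCommGroup B] [Module R B] [AddCommGroup C] [Module R C]
  {G : ℤ → AddSubgroup A} {GA : ℤ → AddSubgroup A} {GB : ℤ → AddSubgroup B}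
  {GC : ℤ → AddSubgroup C}

/-- The chains of homological degree `c` in the Koszul complex whose coefficients have degree `p`;
their internal degree is `c + p`. The family `G` of homogeneous pieces is not required to span. -/
def koszulChains (G : ℤ → AddSubgroup A) (c : ℕ) (p : ℤ) : AddSubgroup (Finset ι → A) where
  carrier := {z | ∀ S, z S ∈ G p ∧ (#S ≠ c → z S = 0)}
  zero_mem' _ := ⟨zero_mem _, fun _ => rfl⟩
  add_mem' hz hw S := ⟨add_mem (hz S).1 (hw S).1, fun h => by simp [(hz S).2 h, (hw S).2 h]⟩
  neg_mem' hz S := ⟨neg_mem (hz S).1, fun h => by simp [(hz S).2 h]⟩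

variable {c : ℕ} {p : ℤ}

lemma comp_mem_koszulChains {φ : A →ₗ[R] B} (hφ : ∀ a ∈ GA p, φ a ∈ GB p) {z : Finset ι → A}
    (hz : z ∈ koszulChains GA c p) : φ ∘ z ∈ koszulChains GB c p :=
  fun S => ⟨hφ _ (hz S).1, fun h => by simp [(hz S).2 h]⟩

lemma exists_koszulChains_comp_eq {ψ : B →ₗ[R] C} {z : Finset ι → C}
    (hz : ∀ S, #S ≠ c → z S = 0) (hlift : ∀ S, ∃ b ∈ GB p, ψ b = z S) :
    ∃ y ∈ koszulChains GB c p, ψ ∘ y = z := by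
  choose y hy hyz using hlift
  refine ⟨fun S => if #S = c then y S else 0, fun S => ⟨?_, fun h => if_neg h⟩, funext fun S => ?_⟩
  · dsimp only
    split_ifs
    exacts [hy S, zero_mem _]
  · by_cases h : #S = c
    · simp [h, hyz]
    · simp [h, hz S h]

/-- Short exactness of `0 → A → B → C → 0` on homogeneous pieces. -/
structure GradedShortExact (GA : ℤ → AddSubgroup A) (GB : ℤ → AddSubgroup B)
    (GC : ℤ → AddSubgroup C) (φ : A →ₗ[R] B) (ψ : B →ₗ[R] C) : Prop where
  injective : Function.Injective φ
  map_left : ∀ p, ∀ a ∈ GA p, φ a ∈ GB p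
  map_right : ∀ p, ∀ b ∈ GB p, ψ b ∈ GC p
  comp_eq_zero : ∀ p, ∀ a ∈ GA p, ψ (φ a) = 0
  exact : ∀ p, ∀ b ∈ GB p, ψ b = 0 → ∃ a ∈ GA p, φ a = b
  surjective : ∀ p, ∀ c ∈ GC p, ∃ b ∈ GB p, ψ b = c

namespace GradedShortExact

variable {φ : A →ₗ[R] B} {ψ : B →ₗ[R] C} (E : GradedShortExact GA GB GC φ ψ)

include E

lemma exists_lift {z : Finset ι → C} (hz : z ∈ koszulChains GC c p) :
    ∃ y ∈ koszulChains GB c p, ψ ∘ y = z :=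
  exists_koszulChains_comp_eq (fun S => (hz S).2) fun S => E.surjective p _ (hz S).1

lemma exists_preimage {y : Finset ι → B} (hy : y ∈ koszulChains GB c p) (h0 : ψ ∘ y = 0) :
    ∃ a ∈ koszulChains GA c p, φ ∘ a = y :=
  exists_koszulChains_comp_eq (fun S => (hy S).2) fun S => E.exact p _ (hy S).1 (congrFun h0 S)

lemma comp_injective {z w : Finset ι → A} (h : φ ∘ z = φ ∘ w) : z = w :=
  E.injective.comp_left h

lemma comp_comp_eq_zero {a : Finset ι → A} (ha : a ∈ koszulChains GA c p) : ψ ∘ φ ∘ a = 0 :=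
  funext fun S => E.comp_eq_zero p _ (ha S).1

end GradedShortExact

variable [LinearOrder ι]

lemma koszulWedge_mem_koszulChains {z : Finset ι → A} (hz : z ∈ koszulChains G c p) (t : ι) :
    koszulWedge t z ∈ koszulChains G (c + 1) p := by
  intro S
  rw [koszulWedge_apply]
  split_ifs with ht
  · refine ⟨zsmul_mem (hz _).1 _, fun hS => ?_⟩
    rw [(hz _).2 (by have := card_erase_add_one ht; omega), smul_zero]
  · exact ⟨zero_mem _, fun _ => rfl⟩

variable [Fintype ι] (x : ι → R)

/-- Every `x t` acts with degree one on the homogeneous pieces `G`. -/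
def ActsWithDegreeOne (G : ℤ → AddSubgroup A) : Prop :=
  ∀ p t, ∀ a ∈ G p, x t • a ∈ G (p + 1)

/-- The Koszul homology `H_c(x; A)` vanishes in coefficient degree `p`. Over a polynomial ring this
is the vanishing of `Tor_c(A, k)` in degree `c + p`. -/
def KoszulVanishes (G : ℤ → AddSubgroup A) (c : ℕ) (p : ℤ) : Prop :=
  ∀ z ∈ koszulChains G c p, koszulD x z = 0 → ∃ w ∈ koszulChains G (c + 1) (p - 1), koszulD x w = z

/-- Castelnuovo–Mumford `r`-regularity, expressed by Koszul homology. -/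
def IsKoszulRegular (G : ℤ → AddSubgroup A) (r : ℤ) : Prop :=
  ∀ c p, r < p → KoszulVanishes x G c p

variable {x}

lemma koszulD_mem_koszulChains (hG : ActsWithDegreeOne x G) {z : Finset ι → A}
    (hz : z ∈ koszulChains G (c + 1) p) : koszulD x z ∈ koszulChains G c (p + 1) := by
  rw [koszulD_apply]
  refine sum_mem fun t _ S => ?_
  rw [Pi.smul_apply, koszulContract_apply]
  split_ifs with ht
  · rw [smul_zero]
    exact ⟨zero_mem _, fun _ => rfl⟩
  · refine ⟨hG _ _ _ (zsmul_mem (hz _).1 _), fun hS => ?_⟩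
    rw [(hz _).2 (by rw [card_insert_of_notMem ht]; omega), smul_zero, smul_zero]

lemma koszulD_mem_koszulChains_of_sub_one (hG : ActsWithDegreeOne x G) {z : Finset ι → A}
    (hz : z ∈ koszulChains G (c + 1) (p - 1)) : koszulD x z ∈ koszulChains G c p := by
  simpa using koszulD_mem_koszulChains hG hz

lemma koszulD_eq_zero_of_mem {z : Finset ι → A} (hz : z ∈ koszulChains G 0 p) :
    koszulD x z = 0 := by
  rw [koszulD_apply]
  refine sum_eq_zero fun t _ => funext fun S => ?_
  rw [Pi.smul_apply, koszulContract_apply]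
  split_ifs with ht
  · exact smul_zero _
  · simp [(hz (insert t S)).2 (by simp [card_insert_of_notMem ht])]

lemma koszulVanishes_of_card_lt (hc : Fintype.card ι < c) : KoszulVanishes x G c p := by
  refine fun z hz _ => ⟨0, zero_mem _, ?_⟩
  rw [map_zero]
  exact funext fun S => ((hz S).2 ((card_le_univ S).trans_lt hc).ne).symm

lemma IsKoszulRegular.mono {r s : ℤ} (h : IsKoszulRegular x G r) (hrs : r ≤ s) :
    IsKoszulRegular x G s :=
  fun c p hp => h c p (hrs.trans_lt hp)

lemma isKoszulRegular_shift_iff {r : ℤ} :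
    IsKoszulRegular x (fun p => G (p - 1)) r ↔ IsKoszulRegular x G (r - 1) := by
  refine ⟨fun h c p hp => ?_, fun h c p hp => h c (p - 1) (by omega)⟩
  obtain ⟨q, rfl⟩ : ∃ q, p = q - 1 := ⟨p + 1, by omega⟩
  exact h c q (by omega)

namespace GradedShortExact

variable {φ : A →ₗ[R] B} {ψ : B →ₗ[R] C} (E : GradedShortExact GA GB GC φ ψ)

include E

theorem koszulVanishes_middle (hB : ActsWithDegreeOne x GB) (hA : KoszulVanishes x GA c p)
    (hC : KoszulVanishes x GC c p) : KoszulVanishes x GB c p := by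
  intro z hz hdz
  obtain ⟨w, hw, hwz⟩ := hC (ψ ∘ z) (comp_mem_koszulChains (E.map_right p) hz) (by
    rw [koszulD_comp, hdz]; simp)
  obtain ⟨y, hy, rfl⟩ := E.exists_lift hw
  have hdiff := sub_mem hz (koszulD_mem_koszulChains_of_sub_one hB hy)
  obtain ⟨a, ha, hay⟩ := E.exists_preimage hdiff <| funext fun S => by
    simpa [koszulD_comp, sub_eq_zero] using (congrFun hwz S).symm
  obtain ⟨a', ha', rfl⟩ := hA a ha (E.comp_injective (by
    rw [← koszulD_comp, hay, map_sub, hdz, koszulD_koszulD, sub_zero]; simp))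
  refine ⟨φ ∘ a' + y, add_mem (comp_mem_koszulChains (E.map_left _) ha') hy, ?_⟩
  rw [map_add, koszulD_comp, hay, sub_add_cancel]

/-- The connecting homomorphism `H_{c+1}(C) → H_c(A)` surjects onto the kernel of
`H_c(A) → H_c(B)`. -/
theorem exists_koszulD_eq_of_comp (hB : ActsWithDegreeOne x GB)
    (hC : KoszulVanishes x GC (c + 1) (p - 1)) {z : Finset ι → A} {y : Finset ι → B}
    (hy : y ∈ koszulChains GB (c + 1) (p - 1)) (hyz : koszulD x y = φ ∘ z)
    (hz : z ∈ koszulChains GA c p) :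
    ∃ w ∈ koszulChains GA (c + 1) (p - 1), koszulD x w = z := by
  obtain ⟨w, hw, hwy⟩ := hC (ψ ∘ y) (comp_mem_koszulChains (E.map_right _) hy) (by
    rw [koszulD_comp, hyz, E.comp_comp_eq_zero hz])
  obtain ⟨b, hb, rfl⟩ := E.exists_lift hw
  have hdiff := sub_mem hy (koszulD_mem_koszulChains_of_sub_one hB hb)
  obtain ⟨a, ha, hay⟩ := E.exists_preimage hdiff <| funext fun S => by
    simpa [koszulD_comp, sub_eq_zero] using (congrFun hwy S).symm
  refine ⟨a, ha, E.comp_injective ?_⟩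
  rw [← koszulD_comp, hay, map_sub, koszulD_koszulD, sub_zero, hyz]

theorem koszulVanishes_left (hB : ActsWithDegreeOne x GB) (hVB : KoszulVanishes x GB c p)
    (hC : KoszulVanishes x GC (c + 1) (p - 1)) : KoszulVanishes x GA c p := by
  intro z hz hdz
  obtain ⟨y, hy, hyz⟩ := hVB (φ ∘ z) (comp_mem_koszulChains (E.map_left p) hz) (by
    rw [koszulD_comp, hdz]; simp)
  exact E.exists_koszulD_eq_of_comp hB hC hy hyz hz

theorem koszulVanishes_right (hB : ActsWithDegreeOne x GB) (hVB : KoszulVanishes x GB c p)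
    (hA : ∀ b, b + 1 = c → KoszulVanishes x GA b (p + 1)) : KoszulVanishes x GC c p := by
  intro z hz hdz
  obtain ⟨y, hy, rfl⟩ := E.exists_lift hz
  obtain ⟨a, ha, hay⟩ : ∃ a ∈ koszulChains GA c p, koszulD x (y - φ ∘ a) = 0 := by
    obtain _ | b := c
    · exact ⟨0, zero_mem _, koszulD_eq_zero_of_mem (sub_mem hy (by simp))⟩
    obtain ⟨a, ha, hay⟩ := E.exists_preimage (koszulD_mem_koszulChains hB hy) (by
      rw [← koszulD_comp, hdz])
    obtain ⟨a', ha', rfl⟩ := hA b rfl a ha (E.comp_injective (by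
      rw [← koszulD_comp, hay, koszulD_koszulD]; simp))
    exact ⟨a', by simpa using ha', by rw [map_sub, koszulD_comp, hay, sub_self]⟩
  obtain ⟨b, hb, hby⟩ := hVB _ (sub_mem hy (comp_mem_koszulChains (E.map_left p) ha)) hay
  refine ⟨ψ ∘ b, comp_mem_koszulChains (E.map_right _) hb, ?_⟩
  rw [koszulD_comp, hby]
  funext S
  simp [E.comp_eq_zero p _ (ha S).1]

variable {r : ℤ}

theorem isKoszulRegular_middle (hB : ActsWithDegreeOne x GB) (hA : IsKoszulRegular x GA r)
    (hC : IsKoszulRegular x GC r) : IsKoszulRegular x GB r :=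
  fun c p hp => E.koszulVanishes_middle hB (hA c p hp) (hC c p hp)

theorem isKoszulRegular_left (hB : ActsWithDegreeOne x GB) (hRB : IsKoszulRegular x GB r)
    (hC : IsKoszulRegular x GC (r - 1)) : IsKoszulRegular x GA r :=
  fun c p hp => E.koszulVanishes_left hB (hRB c p hp) (hC (c + 1) (p - 1) (by omega))

theorem isKoszulRegular_right (hB : ActsWithDegreeOne x GB) (hRB : IsKoszulRegular x GB r)
    (hA : IsKoszulRegular x GA (r + 1)) : IsKoszulRegular x GC r :=
  fun c p hp => E.koszulVanishes_right hB (hRB c p hp) fun b _ => hA b (p + 1) (by omega)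

end GradedShortExact

/-- On the Koszul complex, `f ∈ (x)` acts null-homotopically. So once a cycle of `A` bounds in the
quotient `B`, what is left of it is `f • u` with `u` a cycle, which is a boundary. -/
theorem KoszulVanishes.of_quotient {π : A →ₗ[R] B} {a : ι → R}
    (hA : ActsWithDegreeOne x GA) (hmap : ∀ p, ∀ m ∈ GA p, π m ∈ GB p)
    (hsurj : ∀ p, ∀ b ∈ GB p, ∃ m ∈ GA p, π m = b)
    (ha : ∀ p t, ∀ m ∈ GA p, a t • m ∈ GA p) (hreg : IsSMulRegular A (∑ t, a t * x t))
    (hker : ∀ p, ∀ m ∈ GA p, π m = 0 → ∃ u ∈ GA (p - 1), (∑ t, a t * x t) • u = m)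
    (h : KoszulVanishes x GB c p) : KoszulVanishes x GA c p := by
  intro z hz hdz
  obtain ⟨w, hw, hwz⟩ := h (π ∘ z) (comp_mem_koszulChains (hmap p) hz) (by
    rw [koszulD_comp, hdz]; simp)
  obtain ⟨y, hy, rfl⟩ := exists_koszulChains_comp_eq (fun S => (hw S).2)
    fun S => hsurj (p - 1) _ (hw S).1
  have hrest : z - koszulD x y ∈ koszulChains GA c p :=
    sub_mem hz (koszulD_mem_koszulChains_of_sub_one hA hy)
  obtain ⟨u, hu, huz⟩ := exists_koszulChains_comp_eq (ψ := LinearMap.lsmul R A (∑ t, a t * x t))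
    (fun S => (hrest S).2) fun S => hker p _ (hrest S).1 (by
      simpa [koszulD_comp, sub_eq_zero] using (congrFun hwz S).symm)
  have hdu : koszulD x u = 0 := hreg.comp_left <| by
    change (∑ t, a t * x t) • koszulD x u = (∑ t, a t * x t) • 0
    rw [← koszulD_smul, smul_zero]
    change koszulD x (LinearMap.lsmul R A _ ∘ u) = 0
    rw [huz, map_sub, hdz, koszulD_koszulD, sub_zero]
  refine ⟨y + ∑ t, a t • koszulWedge t u, add_mem hy (sum_mem fun t _ S => ?_), ?_⟩
  · have hwedge := koszulWedge_mem_koszulChains hu t S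
    exact ⟨ha _ t _ hwedge.1, fun hS => by rw [Pi.smul_apply, hwedge.2 hS, smul_zero]⟩
  · have homotopy (t : ι) : koszulD x (koszulWedge t u) = x t • u := by
      simpa [hdu] using koszulD_wedge_add x t u
    simp only [map_add, map_sum, koszulD_smul, homotopy, smul_smul, ← sum_smul]
    exact eq_sub_iff_add_eq'.1 huz

end GradedKoszul

section GradedRing

open DirectSum

variable {R 𝒮 M : Type*} [CommRing R] [SetLike 𝒮 R] [AddSubgroupClass 𝒮 R]
  (𝒜 : ℤ → 𝒮) [AddCommGroup M] [Module R M]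

/-- The homogeneous pieces of the graded free module `⊕ⱼ R(-E j)`. -/
def twistedFree {β : Type*} (E : β → ℤ) (p : ℤ) : AddSubgroup (β → R) where
  carrier := {w | ∀ j, w j ∈ 𝒜 (p - E j)}
  zero_mem' _ := zero_mem _
  add_mem' hw hw' j := add_mem (hw j) (hw' j)
  neg_mem' hw j := neg_mem (hw j)

/-- The homogeneous pieces of `R ⧸ I`. -/
def quotientGrading (I : Ideal R) (p : ℤ) : AddSubgroup (R ⧸ I) :=
  ((Ideal.Quotient.mk I).toAddMonoidHom.comp (AddSubgroupClass.subtype (𝒜 p))).range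

variable {𝒜}

lemma mem_quotientGrading {I : Ideal R} {p : ℤ} {y : R ⧸ I} :
    y ∈ quotientGrading 𝒜 I p ↔ ∃ g ∈ 𝒜 p, Ideal.Quotient.mk I g = y := by
  simp [quotientGrading, AddMonoidHom.mem_range]

lemma exists_quotientGrading_factor {I J : Ideal R} (h : I ≤ J) {p : ℤ} {y : R ⧸ J}
    (hy : y ∈ quotientGrading 𝒜 J p) :
    ∃ z ∈ quotientGrading 𝒜 I p, Submodule.factor h z = y := by
  obtain ⟨g, hg, rfl⟩ := mem_quotientGrading.1 hy
  exact ⟨_, mem_quotientGrading.2 ⟨g, hg, rfl⟩, rfl⟩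

lemma factor_mem_quotientGrading {I J : Ideal R} (h : I ≤ J) {p : ℤ} {y : R ⧸ I}
    (hy : y ∈ quotientGrading 𝒜 I p) : Submodule.factor h y ∈ quotientGrading 𝒜 J p := by
  obtain ⟨g, hg, rfl⟩ := mem_quotientGrading.1 hy
  exact mem_quotientGrading.2 ⟨g, hg, rfl⟩

variable (𝒜) [GradedRing 𝒜]

/-- Projections onto the homogeneous pieces `G` that make `M` a graded module over `(R, 𝒜)`. As an
infinite `finsum` is `0`, the last condition makes every element a finite sum of its components. -/
structure HomogeneousProjections (G : ℤ → AddSubgroup M) where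
  proj : ℤ → M →+ M
  proj_mem : ∀ p m, proj p m ∈ G p
  proj_of_mem : ∀ {p m}, m ∈ G p → proj p m = m
  proj_smul : ∀ {e m} (p a), m ∈ G e → proj p (a • m) = GradedRing.proj 𝒜 (p - e) a • m
  finsum_proj : ∀ m, ∑ᶠ p, proj p m = m

variable {𝒜}

lemma gradedRingProj_mem (p : ℤ) (a : R) : GradedRing.proj 𝒜 p a ∈ 𝒜 p := by
  rw [GradedRing.proj_apply]
  exact SetLike.coe_mem _

lemma gradedRingProj_of_mem {p : ℤ} {a : R} (ha : a ∈ 𝒜 p) : GradedRing.proj 𝒜 p a = a := by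
  rw [GradedRing.proj_apply, decompose_of_mem_same 𝒜 ha]

lemma gradedRingProj_mul {e : ℤ} {b : R} (p : ℤ) (a : R) (hb : b ∈ 𝒜 e) :
    GradedRing.proj 𝒜 p (a * b) = GradedRing.proj 𝒜 (p - e) a * b := by
  obtain ⟨q, rfl⟩ : ∃ q, p = q + e := ⟨p - e, by ring⟩
  rw [add_sub_cancel_right, GradedRing.proj_apply, GradedRing.proj_apply,
    coe_decompose_mul_add_of_right_mem 𝒜 hb]

open Classical in
lemma support_gradedRingProj (a : R) :
    (Function.support fun p => GradedRing.proj 𝒜 p a) = (decompose 𝒜 a).support :=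
  Set.ext fun p => (GradedRing.mem_support_iff 𝒜 a p).symm

lemma finite_support_gradedRingProj (a : R) :
    (Function.support fun p => GradedRing.proj 𝒜 p a).Finite := by
  classical
  rw [support_gradedRingProj]
  exact Finset.finite_toSet _

lemma finsum_gradedRingProj (a : R) : ∑ᶠ p, GradedRing.proj 𝒜 p a = a := by
  classical
  rw [finsum_eq_sum_of_support_subset _ (support_gradedRingProj a).le]
  exact sum_support_decompose 𝒜 a

lemma finite_support_gradedRingProj_pi {β : Type*} [Finite β] (E : β → ℤ) (w : β → R) :
    (Function.support fun p j => GradedRing.proj 𝒜 (p - E j) (w j)).Finite := by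
  refine (Set.finite_iUnion fun j => (finite_support_gradedRingProj (𝒜 := 𝒜) (w j)).preimage
    (sub_left_injective (b := E j)).injOn).subset fun p hp => ?_
  obtain ⟨j, hj⟩ := Function.ne_iff.1 hp
  exact Set.mem_iUnion.2 ⟨j, hj⟩

variable (𝒜) in
/-- The projections of a graded free module, acting coordinatewise. -/
def twistedFreeProjections {β : Type*} [Finite β] (E : β → ℤ) :
    HomogeneousProjections 𝒜 (twistedFree 𝒜 E) where
  proj p := AddMonoidHom.pi fun j =>
    (GradedRing.proj 𝒜 (p - E j)).comp (Pi.evalAddMonoidHom (fun _ => R) j)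
  proj_mem p w j := gradedRingProj_mem _ _
  proj_of_mem hw := funext fun j => gradedRingProj_of_mem (hw j)
  proj_smul p a hw := funext fun j => by
    simpa [sub_sub_sub_cancel_right] using gradedRingProj_mul (p - E j) a (hw j)
  finsum_proj w := funext fun j => by
    refine (finsum_apply (finite_support_gradedRingProj_pi E w) j).trans ?_
    exact (finsum_comp_equiv (Equiv.subRight (E j))).trans (finsum_gradedRingProj (w j))

/-- The projections of `R ⧸ I` for a homogeneous ideal `I`. -/
def quotientProjections {I : Ideal R} (hI : I.IsHomogeneous 𝒜) :
    HomogeneousProjections 𝒜 (quotientGrading 𝒜 I) where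
  proj p := QuotientAddGroup.lift I.toAddSubgroup
    ((Ideal.Quotient.mk I).toAddMonoidHom.comp (GradedRing.proj 𝒜 p))
    fun a ha => Ideal.Quotient.eq_zero_iff_mem.2 (hI p ha)
  proj_mem p y := by
    obtain ⟨a, rfl⟩ := Ideal.Quotient.mk_surjective y
    exact mem_quotientGrading.2 ⟨_, gradedRingProj_mem p a, rfl⟩
  proj_of_mem {p y} hy := by
    obtain ⟨a, ha, rfl⟩ := mem_quotientGrading.1 hy
    exact congrArg _ (gradedRingProj_of_mem ha)
  proj_smul {e y} p a hy := by
    obtain ⟨b, hb, rfl⟩ := mem_quotientGrading.1 hy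
    exact congrArg (Ideal.Quotient.mk I) (gradedRingProj_mul p a hb)
  finsum_proj y := by
    obtain ⟨a, rfl⟩ := Ideal.Quotient.mk_surjective y
    refine ((Ideal.Quotient.mk I).toAddMonoidHom.map_finsum
      (finite_support_gradedRingProj (𝒜 := 𝒜) a)).symm.trans ?_
    exact congrArg (Ideal.Quotient.mk I) (finsum_gradedRingProj a)

/-- The homogeneous pieces of a submodule `N`. -/
def inducedGrading (N : Submodule R M) (G : ℤ → AddSubgroup M) (p : ℤ) : AddSubgroup M :=
  N.toAddSubgroup ⊓ G p

namespace HomogeneousProjections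

variable {G : ℤ → AddSubgroup M} (P : HomogeneousProjections 𝒜 G)

/-- A homogeneous submodule: one that is stable under the projections. -/
def Stabilizes (N : Submodule R M) : Prop :=
  ∀ p, ∀ m ∈ N, P.proj p m ∈ N

include P

lemma smul_mem {a : R} {m : M} {d e : ℤ} (ha : a ∈ 𝒜 d) (hm : m ∈ G e) : a • m ∈ G (d + e) := by
  have := P.proj_mem (d + e) (a • m)
  rwa [P.proj_smul _ _ hm, add_sub_cancel_right, gradedRingProj_of_mem ha] at this

lemma actsWithDegreeOne {ι : Type*} {x : ι → R} (hx : ∀ t, x t ∈ 𝒜 1) : ActsWithDegreeOne x G :=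
  fun p t _ hm => add_comm p 1 ▸ P.smul_mem (hx t) hm

lemma exists_finset_span_eq {N : Submodule R M} (hN : P.Stabilizes N) (hfg : N.FG) :
    ∃ s : Finset M, (∀ m ∈ s, ∃ e, m ∈ G e) ∧ Submodule.span R (s : Set M) = N := by
  have hspan : Submodule.span R {m | m ∈ N ∧ ∃ e, m ∈ G e} = N := by
    refine le_antisymm (Submodule.span_le.2 fun _ hm => hm.1) fun m hm => ?_
    rw [← P.finsum_proj m]
    exact finsum_induction (· ∈ Submodule.span R {m | m ∈ N ∧ ∃ e, m ∈ G e}) (zero_mem _)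
      (fun _ _ => add_mem) fun p => Submodule.subset_span ⟨hN p m hm, p, P.proj_mem p m⟩
  rw [← hspan, Submodule.fg_span_iff_fg_span_finset_subset] at hfg
  obtain ⟨s, hs, hsN⟩ := hfg
  exact ⟨s, fun m hm => (hs hm).2, by rw [← hsN, hspan]⟩

theorem exists_irredundant_generators {N : Submodule R M} (hN : P.Stabilizes N) (hfg : N.FG) :
    ∃ (b : ℕ) (E : Fin b → ℤ) (m : Fin b → M), (∀ j, m j ∈ G (E j)) ∧
      Submodule.span R (Set.range m) = N ∧ ∀ j, m j ∉ Submodule.span R (m '' {j}ᶜ) := by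
  classical
  obtain ⟨s, ⟨hsG, hsN⟩, hmin⟩ := exists_minimal_of_wellFoundedLT
    (fun s : Finset M => (∀ m ∈ s, ∃ e, m ∈ G e) ∧ Submodule.span R (s : Set M) = N)
    (P.exists_finset_span_eq hN hfg)
  have hirr : ∀ m ∈ s, m ∉ Submodule.span R ((s : Set M) \ {m}) := fun m hm hmem => by
    refine Finset.notMem_erase m s (hmin (y := s.erase m)
      ⟨fun m' hm' => hsG m' (Finset.mem_of_mem_erase hm'), ?_⟩ (Finset.erase_subset m s) hm)
    rw [Finset.coe_erase, ← hsN, ← Submodule.span_insert_eq_span hmem, Set.insert_sdiff_singleton,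
      Set.insert_eq_of_mem (Finset.mem_coe.2 hm)]
  choose E hE using fun j => hsG (s.equivFin.symm j) (s.equivFin.symm j).2
  refine ⟨s.card, E, fun j => s.equivFin.symm j, hE, ?_, fun j hj => ?_⟩
  · rw [← hsN]
    congr 1
    ext m
    exact ⟨by rintro ⟨j, rfl⟩; exact (s.equivFin.symm j).2,
      fun hm => ⟨s.equivFin ⟨m, hm⟩, by simp⟩⟩
  · refine hirr _ (s.equivFin.symm j).2 (Submodule.span_mono ?_ hj)
    rintro _ ⟨i, hij, rfl⟩
    exact ⟨(s.equivFin.symm i).2, fun h => hij (s.equivFin.symm.injective (Subtype.ext h))⟩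

variable {β : Type*} [Finite β] [DecidableEq β] {E : β → ℤ} {φ : (β → R) →ₗ[R] M}

lemma proj_map (hφ : ∀ j, φ (Pi.single j 1) ∈ G (E j)) (p : ℤ) (w : β → R) :
    P.proj p (φ w) = φ ((twistedFreeProjections 𝒜 E).proj p w) := by
  cases nonempty_fintype β
  have expand (v : β → R) : φ v = ∑ j, v j • φ (Pi.single j 1) := by
    simp only [← map_smul, ← map_sum]
    rw [← pi_eq_sum_univ' v]
  rw [expand w, expand, map_sum]
  exact Finset.sum_congr rfl fun j _ => P.proj_smul p (w j) (hφ j)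

lemma map_mem (hφ : ∀ j, φ (Pi.single j 1) ∈ G (E j)) {p : ℤ} {w : β → R}
    (hw : w ∈ twistedFree 𝒜 E p) : φ w ∈ G p := by
  rw [← (twistedFreeProjections 𝒜 E).proj_of_mem hw, ← P.proj_map hφ]
  exact P.proj_mem p _

lemma stabilizes_ker (hφ : ∀ j, φ (Pi.single j 1) ∈ G (E j)) :
    (twistedFreeProjections 𝒜 E).Stabilizes (LinearMap.ker φ) := fun p w hw => by
  rw [LinearMap.mem_ker, ← P.proj_map hφ, LinearMap.mem_ker.1 hw, map_zero]

theorem gradedShortExact_ker (hφ : ∀ j, φ (Pi.single j 1) ∈ G (E j)) :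
    GradedShortExact (inducedGrading (LinearMap.ker φ) (twistedFree 𝒜 E)) (twistedFree 𝒜 E)
      (inducedGrading (LinearMap.range φ) G) LinearMap.id φ where
  injective := Function.injective_id
  map_left _ _ hw := hw.2
  map_right _ w hw := ⟨⟨w, rfl⟩, P.map_mem hφ hw⟩
  comp_eq_zero _ _ hw := hw.1
  exact _ w hw h0 := ⟨w, ⟨h0, hw⟩, rfl⟩
  surjective := by
    rintro p _ ⟨⟨w, rfl⟩, hp⟩
    exact ⟨_, (twistedFreeProjections 𝒜 E).proj_mem p w, by rw [← P.proj_map hφ, P.proj_of_mem hp]⟩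

end HomogeneousProjections

variable {I J H : Ideal R} {f : R} {d : ℤ}

lemma exists_sub_mem_of_mem_sup_span (hJ : J.IsHomogeneous 𝒜) (hf : f ∈ 𝒜 d) {p : ℤ} {g : R}
    (hg : g ∈ 𝒜 p) (hgJ : g ∈ J ⊔ Ideal.span {f}) : ∃ h ∈ 𝒜 (p - d), f * h - g ∈ J := by
  obtain ⟨j, hj, m, hm, rfl⟩ := Submodule.mem_sup.1 hgJ
  obtain ⟨h, rfl⟩ := Ideal.mem_span_singleton'.1 hm
  refine ⟨_, gradedRingProj_mem (p - d) h, ?_⟩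
  rw [← gradedRingProj_of_mem hg, map_add, gradedRingProj_mul p h hf, mul_comm f,
    sub_add_cancel_right]
  exact neg_mem (hJ p hj)

lemma exists_smul_eq_of_factor_eq_zero (hJ : J.IsHomogeneous 𝒜) (hf : f ∈ 𝒜 d) (hJI : J ≤ I)
    (hIJ : I ≤ J ⊔ Ideal.span {f}) {p : ℤ} {y : R ⧸ J} (hy : y ∈ quotientGrading 𝒜 J p)
    (h0 : Submodule.factor hJI y = 0) : ∃ u ∈ quotientGrading 𝒜 J (p - d), f • u = y := by
  obtain ⟨g, hg, rfl⟩ := mem_quotientGrading.1 hy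
  obtain ⟨h, hh, hgh⟩ := exists_sub_mem_of_mem_sup_span hJ hf hg
    (hIJ (Ideal.Quotient.eq_zero_iff_mem.1 h0))
  exact ⟨_, mem_quotientGrading.2 ⟨h, hh, rfl⟩, Ideal.Quotient.eq.2 hgh⟩

lemma mem_sup_of_mul_mem (hf : ∀ g, f * g ∈ J → g ∈ J) {g : R}
    (hg : f * g ∈ J ⊔ Ideal.span {f} * H) : g ∈ J ⊔ H := by
  obtain ⟨j, hj, m, hm, hjm⟩ := Submodule.mem_sup.1 hg
  obtain ⟨h, hh, rfl⟩ := Ideal.mem_span_singleton_mul.1 hm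
  have hgh : g - h ∈ J := hf _ (by rwa [mul_sub, ← hjm, add_sub_cancel_right])
  exact Submodule.mem_sup.2 ⟨_, hgh, h, hh, sub_add_cancel g h⟩

lemma sup_le_comap_mul :
    J ⊔ H ≤ Submodule.comap (LinearMap.mulLeft R f) (J ⊔ Ideal.span {f} * H) :=
  sup_le (fun _ hj => Ideal.mem_sup_left (J.mul_mem_left f hj)) fun _ hh =>
    Ideal.mem_sup_right (Ideal.mul_mem_mul (Ideal.mem_span_singleton_self f) hh)

/-- For `I = J + fH` with `f` regular modulo `J`, multiplication by `f` gives
`0 → R/(J+H)(-d) → R/I → R/(J, f) → 0`. -/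
theorem gradedShortExact_mul (hJ : J.IsHomogeneous 𝒜) (hf : f ∈ 𝒜 d)
    (hreg : ∀ g, f * g ∈ J → g ∈ J) :
    GradedShortExact (fun p => quotientGrading 𝒜 (J ⊔ H) (p - d))
      (quotientGrading 𝒜 (J ⊔ Ideal.span {f} * H)) (quotientGrading 𝒜 (J ⊔ Ideal.span {f}))
      (Submodule.mapQ _ _ (LinearMap.mulLeft R f) sup_le_comap_mul)
      (Submodule.factor (sup_le_sup_left Ideal.mul_le_left J)) where
  injective := (injective_iff_map_eq_zero _).2 fun y h0 => by
    obtain ⟨g, rfl⟩ := Ideal.Quotient.mk_surjective y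
    exact Ideal.Quotient.eq_zero_iff_mem.2
      (mem_sup_of_mul_mem hreg (Ideal.Quotient.eq_zero_iff_mem.1 h0))
  map_left p y hy := by
    obtain ⟨g, hg, rfl⟩ := mem_quotientGrading.1 hy
    exact mem_quotientGrading.2 ⟨f * g, add_sub_cancel d p ▸ SetLike.mul_mem_graded hf hg, rfl⟩
  map_right _ _ hy := factor_mem_quotientGrading _ hy
  comp_eq_zero p y hy := by
    obtain ⟨g, -, rfl⟩ := mem_quotientGrading.1 hy
    exact Ideal.Quotient.eq_zero_iff_mem.2 <| Ideal.mem_sup_right <|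
      Ideal.mul_mem_right _ _ (Ideal.mem_span_singleton_self f)
  exact p y hy h0 := by
    obtain ⟨g, hg, rfl⟩ := mem_quotientGrading.1 hy
    obtain ⟨h, hh, hgh⟩ := exists_sub_mem_of_mem_sup_span hJ hf hg
      (Ideal.Quotient.eq_zero_iff_mem.1 h0)
    exact ⟨_, mem_quotientGrading.2 ⟨h, hh, rfl⟩, Ideal.Quotient.eq.2 (Ideal.mem_sup_left hgh)⟩
  surjective _ _ hy := exists_quotientGrading_factor _ hy

end GradedRing

section PolynomialRing

open Finset

variable {σ k : Type*} [CommRing k]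

variable (σ k) in
/-- The polynomials that are homogeneous of degree `p`, for the standard grading extended by zero
to negative degrees. -/
noncomputable def integerGrading (p : ℤ) : AddSubgroup (MvPolynomial σ k) :=
  (weightedHomogeneousSubmodule k (1 : σ → ℤ) p).toAddSubgroup

lemma mem_integerGrading {p : ℤ} {g : MvPolynomial σ k} :
    g ∈ integerGrading σ k p ↔ IsWeightedHomogeneous (1 : σ → ℤ) g p := Iff.rfl

noncomputable instance : GradedRing (integerGrading σ k) :=
  let G : GradedRing (weightedHomogeneousSubmodule k (1 : σ → ℤ)) := weightedGradedAlgebra k 1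
  { one_mem := G.one_mem
    mul_mem _ _ _ _ ha hb := G.mul_mem ha hb
    decompose' := G.decompose'
    left_inv := G.left_inv
    right_inv := G.right_inv }

lemma X_mem_integerGrading (t : σ) : X t ∈ integerGrading σ k 1 :=
  isWeightedHomogeneous_X k (1 : σ → ℤ) t

lemma monomial_mem_integerGrading (a : σ →₀ ℕ) (r : k) :
    monomial a r ∈ integerGrading σ k (Finsupp.weight 1 a) :=
  isWeightedHomogeneous_monomial _ a r rfl

lemma monomial_one_mul_mem_integerGrading {q : ℤ} {a : σ →₀ ℕ} {g : MvPolynomial σ k} :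
    monomial a 1 * g ∈ integerGrading σ k (q + Finsupp.weight 1 a) ↔ g ∈ integerGrading σ k q := by
  refine ⟨fun h d hd => ?_, fun h => ?_⟩
  · have := h (d := a + d) (by rwa [coeff_monomial_mul, one_mul])
    rw [map_add] at this
    omega
  · rw [add_comm]
    exact SetLike.mul_mem_graded (monomial_mem_integerGrading a 1) h

/-- The exponent of the squarefree monomial `∏ t ∈ S, X t`. -/
noncomputable def squarefreeExponent (S : Finset σ) : σ →₀ ℕ := ∑ t ∈ S, Finsupp.single t 1

lemma squarefreeExponent_le {S : Finset σ} {a : σ →₀ ℕ} :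
    squarefreeExponent S ≤ a ↔ ∀ s ∈ S, a s ≠ 0 := by
  classical
  simp only [Finsupp.le_def, squarefreeExponent, Finsupp.finsetSum_apply, Finsupp.single_apply,
    sum_ite_eq']
  refine forall_congr' fun s => ?_
  split_ifs with hs <;> simp [hs, Nat.one_le_iff_ne_zero]

lemma weight_squarefreeExponent (S : Finset σ) :
    Finsupp.weight (1 : σ → ℤ) (squarefreeExponent S) = #S := by
  simp [squarefreeExponent, Finsupp.weight_single]

/-- Multiplies the coefficient at `S` of a Koszul chain by `∏ t ∈ S, X t`. This embeds the Koszul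
complex of the variables into the Koszul complex of the constants `1`. -/
noncomputable def squarefreeScale :
    (Finset σ → MvPolynomial σ k) →+ (Finset σ → MvPolynomial σ k) where
  toFun z S := monomial (squarefreeExponent S) 1 * z S
  map_zero' := by ext; simp
  map_add' z w := by ext; simp [mul_add]

lemma squarefreeScale_apply (z : Finset σ → MvPolynomial σ k) (S : Finset σ) :
    squarefreeScale z S = monomial (squarefreeExponent S) 1 * z S := rfl

lemma squarefreeScale_injective : Function.Injective (squarefreeScale (σ := σ) (k := k)) :=
  fun z w h => funext fun S => by
    have hS : squarefreeScale z S = squarefreeScale w S := congrFun h S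
    rwa [squarefreeScale_apply, squarefreeScale_apply, monomial_one_mul_cancel_left_iff] at hS

lemma squarefreeScale_mem_koszulChains {z : Finset σ → MvPolynomial σ k} {c : ℕ} {q : ℤ} :
    squarefreeScale z ∈ koszulChains (integerGrading σ k) c (q + c) ↔
      z ∈ koszulChains (integerGrading σ k) c q := by
  refine forall_congr' fun S => ?_
  have cancel : squarefreeScale z S = 0 ↔ z S = 0 := by
    simpa only [mul_zero, squarefreeScale_apply] using
      monomial_one_mul_cancel_left_iff (m := squarefreeExponent S) (p := z S) (q := 0)
  by_cases hS : #S = c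
  · simp only [hS, ne_eq, not_true_eq_false, false_imp_iff, and_true, squarefreeScale_apply]
    rw [← hS, ← weight_squarefreeExponent, monomial_one_mul_mem_integerGrading]
  · simp only [hS, ne_eq, not_false_eq_true, true_imp_iff, cancel]
    refine and_congr_left fun h0 => ?_
    simp only [h0, cancel.2 h0, zero_mem]

/-- The projection of a polynomial onto its term of multidegree `a`. -/
noncomputable def monomialPart (a : σ →₀ ℕ) : MvPolynomial σ k →ₗ[k] MvPolynomial σ k :=
  monomial a ∘ₗ lcoeff k a

lemma monomialPart_apply (a : σ →₀ ℕ) (g : MvPolynomial σ k) :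
    monomialPart a g = monomial a (coeff a g) := rfl

lemma monomialPart_mem_integerGrading (a : σ →₀ ℕ) {q : ℤ} {g : MvPolynomial σ k}
    (hg : g ∈ integerGrading σ k q) : monomialPart a g ∈ integerGrading σ k q := by
  rw [monomialPart_apply]
  by_cases ha : coeff a g = 0
  · rw [ha, map_zero]
    exact zero_mem _
  · exact hg ha ▸ monomial_mem_integerGrading a _

lemma dvd_monomialPart_mul [DecidableEq σ] {S : Finset σ} {t : σ} {a : σ →₀ ℕ} (ha : a t ≠ 0)
    (g : MvPolynomial σ k) : monomial (squarefreeExponent S) 1 ∣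
      monomialPart a (monomial (squarefreeExponent (S.erase t)) 1 * g) := by
  rw [monomialPart_apply, coeff_monomial_mul']
  split_ifs with h
  · refine monomial_dvd_monomial.2 ⟨.inr (squarefreeExponent_le.2 fun s hs => ?_), one_dvd _⟩
    by_cases hst : s = t
    exacts [hst ▸ ha, squarefreeExponent_le.1 h s (mem_erase.2 ⟨hst, hs⟩)]
  · simp

lemma ne_zero_of_mem_support_squarefreeScale {z : Finset σ → MvPolynomial σ k}
    (h0 : coeff 0 (z ∅) = 0) {S : Finset σ} {a : σ →₀ ℕ} (ha : a ∈ (squarefreeScale z S).support) :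
    a ≠ 0 := by
  rintro rfl
  rw [mem_support_iff, squarefreeScale_apply, coeff_monomial_mul'] at ha
  obtain ⟨hle, hne⟩ := ite_ne_right_iff.1 ha
  obtain rfl : S = ∅ := eq_empty_of_forall_notMem fun s hs => squarefreeExponent_le.1 hle s hs rfl
  simp [h0] at hne

variable [LinearOrder σ]

lemma dvd_koszulWedge_monomialPart {t : σ} {a : σ →₀ ℕ} (ha : a t ≠ 0)
    (z : Finset σ → MvPolynomial σ k) (S : Finset σ) : monomial (squarefreeExponent S) 1 ∣
      koszulWedge t (monomialPart a ∘ squarefreeScale z) S := by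
  rw [koszulWedge_apply]
  split_ifs
  exacts [dvd_smul_of_dvd _ (dvd_monomialPart_mul ha _), dvd_zero _]

variable [Fintype σ]

lemma koszulD_squarefreeScale (z : Finset σ → MvPolynomial σ k) :
    koszulD (1 : σ → k) (squarefreeScale z) = squarefreeScale (koszulD (X (R := k)) z) := by
  ext1 S
  simp only [koszulD_apply, Finset.sum_apply, squarefreeScale_apply, mul_sum]
  refine sum_congr rfl fun t _ => ?_
  by_cases ht : t ∈ S
  · simp [koszulContract_apply, ht]
  · simp only [Pi.smul_apply, koszulContract_apply, ht, if_false, Pi.one_apply, one_smul,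
      squarefreeScale_apply, squarefreeExponent, sum_insert ht, smul_eq_mul, mul_smul_comm]
    rw [← mul_assoc, mul_comm (monomial _ 1) (X t), X, monomial_mul, one_mul]

lemma sum_monomialPart_comp (y : Finset σ → MvPolynomial σ k) :
    ∑ a ∈ univ.biUnion fun S => (y S).support, monomialPart a ∘ y = y := by
  ext1 S
  rw [Finset.sum_apply]
  conv_rhs => rw [(y S).as_sum]
  exact (sum_subset (subset_biUnion_of_mem _ (mem_univ S)) fun a _ ha => by
    simp [monomialPart_apply, MvPolynomial.notMem_support_iff.1 ha]).symm

lemma koszulD_one_wedge_comp {y : Finset σ → MvPolynomial σ k} (hy : koszulD (1 : σ → k) y = 0)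
    (φ : MvPolynomial σ k →ₗ[k] MvPolynomial σ k) (t : σ) :
    koszulD (1 : σ → k) (koszulWedge t (φ ∘ y)) = φ ∘ y := by
  have hφ : koszulD (1 : σ → k) (φ ∘ y) = 0 := by
    rw [koszulD_comp, hy]
    exact funext fun _ => map_zero φ
  simpa [hφ] using koszulD_wedge_add (1 : σ → k) t (φ ∘ y)

/-- Acyclicity of the Koszul complex of the variables: after rescaling, the piece of multidegree
`a ≠ 0` is contracted by wedging with `e_t` for any `t` in the support of `a`. -/
theorem exists_koszulD_X_eq {c : ℕ} {p : ℤ} {z : Finset σ → MvPolynomial σ k}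
    (hz : z ∈ koszulChains (integerGrading σ k) c p) (hdz : koszulD (X (R := k)) z = 0)
    (h0 : coeff 0 (z ∅) = 0) :
    ∃ w ∈ koszulChains (integerGrading σ k) (c + 1) (p - 1), koszulD (X (R := k)) w = z := by
  have hdy : koszulD (1 : σ → k) (squarefreeScale z) = 0 := by
    rw [koszulD_squarefreeScale, hdz, map_zero]
  have contract : ∀ a ∈ univ.biUnion fun S => (squarefreeScale z S).support,
      ∃ w ∈ koszulChains (integerGrading σ k) (c + 1) (p + c),
        koszulD (1 : σ → k) w = monomialPart a ∘ squarefreeScale z ∧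
        ∀ S, monomial (squarefreeExponent S) 1 ∣ w S := fun a ha => by
    obtain ⟨S, -, hS⟩ := mem_biUnion.1 ha
    obtain ⟨t, ht⟩ := Finsupp.ne_iff.1 (ne_zero_of_mem_support_squarefreeScale h0 hS)
    exact ⟨_, koszulWedge_mem_koszulChains (comp_mem_koszulChains
      (fun _ => monomialPart_mem_integerGrading a) (squarefreeScale_mem_koszulChains.2 hz)) t,
      koszulD_one_wedge_comp hdy _ t, dvd_koszulWedge_monomialPart ht z⟩
  choose! w hw hdw hdvd using contract
  choose v hv using fun S => dvd_sum fun a ha => hdvd a ha S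
  have hvw : squarefreeScale v = ∑ a ∈ univ.biUnion fun S => (squarefreeScale z S).support, w a :=
    funext fun S => (hv S).symm.trans (Finset.sum_apply S _ _).symm
  refine ⟨v, squarefreeScale_mem_koszulChains.1 ?_, squarefreeScale_injective ?_⟩
  · rw [hvw, show p - 1 + ↑(c + 1) = p + c by push_cast; ring]
    exact sum_mem hw
  · rw [← koszulD_squarefreeScale, hvw, map_sum, sum_congr rfl hdw, sum_monomialPart_comp]

/-- The Koszul homology of a free module over the polynomial ring is carried by the constant terms
of the chains of homological degree zero. -/
theorem exists_koszulD_X_eq_twistedFree {β : Type*} {E : β → ℤ} {c : ℕ} {p : ℤ}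
    {z : Finset σ → β → MvPolynomial σ k}
    (hz : z ∈ koszulChains (twistedFree (integerGrading σ k) E) c p)
    (hdz : koszulD (X (R := k)) z = 0) (h0 : ∀ j, coeff 0 (z ∅ j) = 0) :
    ∃ w ∈ koszulChains (twistedFree (integerGrading σ k) E) (c + 1) (p - 1),
      koszulD (X (R := k)) w = z := by
  have coordinate (y : Finset σ → β → MvPolynomial σ k) (j : β) :
      koszulD X (fun S => y S j) = fun S => koszulD (X (R := k)) y S j :=
    koszulD_comp X (LinearMap.proj (φ := fun _ => MvPolynomial σ k) j) y
  choose w hw hwz using fun j => exists_koszulD_X_eq (z := fun S => z S j) (p := p - E j)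
    (fun S => ⟨(hz S).1 j, fun hS => congrFun ((hz S).2 hS) j⟩)
    (by rw [coordinate, hdz]; rfl) (h0 j)
  refine ⟨fun S j => w j S, fun S => ⟨fun j => ?_, fun hS => funext fun j => (hw j S).2 hS⟩, ?_⟩
  · exact sub_right_comm p 1 (E j) ▸ (hw j S).1
  · funext S j
    rw [← congrFun (hwz j) S, ← congrFun (coordinate (fun S j => w j S) j) S]

end PolynomialRing

section MinimalCover

variable {σ k : Type*}

section CommRing

variable [CommRing k]

lemma weight_one_eq_natCast (a : σ →₀ ℕ) :
    Finsupp.weight (1 : σ → ℤ) a = (Finsupp.weight (1 : σ → ℕ) a : ℕ) := by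
  simp [Finsupp.weight_apply, Finsupp.sum]

lemma mem_integerGrading_natCast {m : ℕ} {g : MvPolynomial σ k} :
    g ∈ integerGrading σ k m ↔ g.IsHomogeneous m :=
  forall_congr' fun a => by rw [weight_one_eq_natCast, Nat.cast_inj]

lemma coeff_zero_eq_zero_of_mem_integerGrading {q : ℤ} (hq : q ≠ 0) {g : MvPolynomial σ k}
    (hg : g ∈ integerGrading σ k q) : coeff 0 g = 0 :=
  (mem_integerGrading.1 hg).coeff_eq_zero 0 (by rw [map_zero]; exact hq.symm)

variable [Fintype σ] [LinearOrder σ]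

lemma coeff_zero_koszulD_X {β : Type*} (y : Finset σ → β → MvPolynomial σ k) (S : Finset σ)
    (j : β) : coeff 0 (koszulD (X (R := k)) y S j) = 0 := by
  simp [koszulD_apply, ← constantCoeff_eq]

/-- The condition `reg R/I ≤ r`, read off the Koszul homology `Tor(R/I, k)`. -/
def IsRegularQuotient (I : Ideal (MvPolynomial σ k)) (r : ℤ) : Prop :=
  IsKoszulRegular (X (σ := σ) (R := k)) (quotientGrading (integerGrading σ k) I) r

lemma isKoszulRegular_twistedFree {β : Type*} {E : β → ℤ} {r : ℤ} (hE : ∀ j, E j ≤ r) :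
    IsKoszulRegular (X (σ := σ) (R := k)) (twistedFree (integerGrading σ k) E) r :=
  fun _ p hp z hz hdz => exists_koszulD_X_eq_twistedFree hz hdz fun j =>
    coeff_zero_eq_zero_of_mem_integerGrading (by have := hE j; omega) ((hz ∅).1 j)

theorem HomogeneousProjections.isKoszulRegular_range {M : Type*} [AddCommGroup M]
    [Module (MvPolynomial σ k) M] {G : ℤ → AddSubgroup M}
    (P : HomogeneousProjections (integerGrading σ k) G) {β : Type*} [Finite β] [DecidableEq β]
    {E : β → ℤ} {φ : (β → MvPolynomial σ k) →ₗ[MvPolynomial σ k] M}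
    (hφ : ∀ j, φ (Pi.single j 1) ∈ G (E j)) {r : ℤ} (hE : ∀ j, E j ≤ r)
    (hker : IsKoszulRegular (X (σ := σ) (R := k))
      (inducedGrading (LinearMap.ker φ) (twistedFree (integerGrading σ k) E)) (r + 1)) :
    IsKoszulRegular (X (σ := σ) (R := k)) (inducedGrading (LinearMap.range φ) G) r :=
  (P.gradedShortExact_ker hφ).isKoszulRegular_right
    ((twistedFreeProjections _ E).actsWithDegreeOne X_mem_integerGrading)
    (isKoszulRegular_twistedFree hE) hker

end CommRing

variable [Field k]

lemma isUnit_of_mem_integerGrading {q : ℤ} {g : MvPolynomial σ k} (hg : g ∈ integerGrading σ k q)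
    (h0 : coeff 0 g ≠ 0) : IsUnit g := by
  obtain rfl : q = 0 := by_contra fun hq => h0 (coeff_zero_eq_zero_of_mem_integerGrading hq hg)
  have hdeg : g.totalDegree = 0 :=
    (totalDegree_zero_iff_isHomogeneous σ).2 (mem_integerGrading_natCast.1 hg)
  rw [totalDegree_eq_zero_iff_eq_C.1 hdeg]
  exact h0.isUnit.map C

variable {M : Type*} [AddCommGroup M] [Module (MvPolynomial σ k) M] {G : ℤ → AddSubgroup M}
  {β : Type*} {E : β → ℤ} {φ : (β → MvPolynomial σ k) →ₗ[MvPolynomial σ k] M}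

/-- A graded map from a free module is minimal if the entries of its homogeneous syzygies lie in
the irrelevant ideal. -/
def IsMinimalCover (E : β → ℤ) (φ : (β → MvPolynomial σ k) →ₗ[MvPolynomial σ k] M) : Prop :=
  ∀ p, ∀ w ∈ inducedGrading (LinearMap.ker φ) (twistedFree (integerGrading σ k) E) p,
    ∀ j, coeff 0 (w j) = 0

lemma isMinimalCover_of_irredundant [Fintype β] {m : β → M}
    (hm : ∀ j, m j ∉ Submodule.span (MvPolynomial σ k) (m '' {j}ᶜ)) :
    IsMinimalCover E (Fintype.linearCombination (MvPolynomial σ k) m) := by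
  classical
  rintro p w ⟨hw, hwE⟩ j
  by_contra hj
  have hsum : w j • m j = -∑ i ∈ {j}ᶜ, w i • m i := by
    rw [eq_neg_iff_add_eq_zero, ← Finset.sum_singleton (fun i => w i • m i) j,
      Finset.sum_add_sum_compl]
    exact hw
  refine hm j ((Submodule.smul_mem_iff_of_isUnit _
    (isUnit_of_mem_integerGrading (hwE j) hj)).1 (hsum ▸ neg_mem ?_))
  exact sum_mem fun i hi => Submodule.smul_mem _ _
    (Submodule.subset_span ⟨i, by simpa using hi, rfl⟩)

theorem HomogeneousProjections.exists_minimalCover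
    (P : HomogeneousProjections (integerGrading σ k) G) {N : Submodule (MvPolynomial σ k) M}
    (hN : P.Stabilizes N) (hfg : N.FG) :
    ∃ (b : ℕ) (E : Fin b → ℤ) (m : Fin b → M), (∀ j, m j ∈ G (E j)) ∧
      LinearMap.range (Fintype.linearCombination (MvPolynomial σ k) m) = N ∧
      IsMinimalCover E (Fintype.linearCombination (MvPolynomial σ k) m) := by
  obtain ⟨b, E, m, hmE, hspan, hirr⟩ := P.exists_irredundant_generators hN hfg
  exact ⟨b, E, m, hmE, by rw [Fintype.range_linearCombination, hspan],
    isMinimalCover_of_irredundant hirr⟩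

namespace IsMinimalCover

variable [Fintype σ] [LinearOrder σ] [Finite β] [DecidableEq β]

theorem koszulVanishes_ker (hmin : IsMinimalCover E φ)
    (P : HomogeneousProjections (integerGrading σ k) G)
    (hφ : ∀ j, φ (Pi.single j 1) ∈ G (E j)) {c : ℕ} {p : ℤ}
    (h : KoszulVanishes (X (σ := σ) (R := k))
      (inducedGrading (LinearMap.range φ) G) (c + 1) (p - 1)) :
    KoszulVanishes (X (σ := σ) (R := k))
      (inducedGrading (LinearMap.ker φ) (twistedFree (integerGrading σ k) E)) c p := by
  intro z hz hdz
  obtain ⟨y, hy, hyz⟩ := exists_koszulD_X_eq_twistedFree (fun S => ⟨(hz S).1.2, (hz S).2⟩) hdz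
    (hmin p _ (hz ∅).1)
  exact (P.gradedShortExact_ker hφ).exists_koszulD_eq_of_comp
    ((twistedFreeProjections _ E).actsWithDegreeOne X_mem_integerGrading) h hy hyz hz

/-- A generator in degree `p` of a minimal cover gives a nonzero class in `H_0 = M ⊗ k`. -/
theorem not_koszulVanishes_zero (hmin : IsMinimalCover E φ)
    (P : HomogeneousProjections (integerGrading σ k) G)
    (hφ : ∀ j, φ (Pi.single j 1) ∈ G (E j)) (j : β) :
    ¬ KoszulVanishes (X (σ := σ) (R := k)) (inducedGrading (LinearMap.range φ) G) 0 (E j) := by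
  intro h
  have ses := P.gradedShortExact_ker hφ
  have hact := (twistedFreeProjections (integerGrading σ k) E).actsWithDegreeOne
    X_mem_integerGrading
  set e : Finset σ → β → MvPolynomial σ k := Pi.single ∅ (Pi.single j 1) with he_def
  have he : e ∈ koszulChains (twistedFree (integerGrading σ k) E) 0 (E j) := by
    refine fun S => ⟨fun i => ?_, fun hS => ?_⟩
    · obtain rfl | hS := eq_or_ne S ∅
      · obtain rfl | hi := eq_or_ne i j
        · simpa [he_def] using SetLike.one_mem_graded (integerGrading σ k)
        · simp [he_def, hi]
      · simp [he_def, hS]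
    · rw [he_def, Pi.single_eq_of_ne (Finset.card_ne_zero.1 hS).ne_empty]
  have hφe := comp_mem_koszulChains (ses.map_right _) he
  obtain ⟨w, hw, hwe⟩ := h _ hφe (koszulD_eq_zero_of_mem hφe)
  obtain ⟨y, hy, rfl⟩ := ses.exists_lift hw
  have hker : φ ((e - koszulD (X (R := k)) y) ∅) = 0 := by
    have := congrFun hwe ∅
    rw [koszulD_comp] at this
    simpa [sub_eq_zero] using this.symm
  have := hmin _ _ ⟨hker, (sub_mem he (koszulD_mem_koszulChains_of_sub_one hact hy) ∅).1⟩ j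
  simp [he_def, coeff_zero_koszulD_X] at this

end IsMinimalCover

end MinimalCover

section Syzygies

variable {σ k : Type*} [Field k]

variable (σ k) in
/-- A homogeneous submodule of a graded free module of finite rank. -/
structure SyzygyModule [Finite σ] where
  rank : ℕ
  deg : Fin rank → ℤ
  carrier : Submodule (MvPolynomial σ k) (Fin rank → MvPolynomial σ k)
  stabilizes : (twistedFreeProjections (integerGrading σ k) deg).Stabilizes carrier

namespace SyzygyModule

/-- The homogeneous pieces of a syzygy module. -/
noncomputable def grading [Finite σ] (S : SyzygyModule σ k) :
    ℤ → AddSubgroup (Fin S.rank → MvPolynomial σ k) :=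
  inducedGrading S.carrier (twistedFree (integerGrading σ k) S.deg)

/-- The matrix `A` is a minimal presentation of `S` by homogeneous generators, with module of
relations `T`. -/
structure IsMinimalPresentation [Finite σ] (S T : SyzygyModule σ k)
    (A : Matrix (Fin S.rank) (Fin T.rank) (MvPolynomial σ k)) : Prop where
  entry_mem : ∀ i j, A i j ∈ integerGrading σ k (T.deg j - S.deg i)
  range_eq : LinearMap.range A.mulVecLin = S.carrier
  ker_eq : LinearMap.ker A.mulVecLin = T.carrier
  isMinimalCover : IsMinimalCover T.deg A.mulVecLin

theorem exists_isMinimalPresentation [Finite σ] (S : SyzygyModule σ k) :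
    ∃ (T : SyzygyModule σ k) (A : Matrix (Fin S.rank) (Fin T.rank) (MvPolynomial σ k)),
      S.IsMinimalPresentation T A := by
  obtain ⟨b, E, m, hmE, hrange, hmin⟩ :=
    (twistedFreeProjections (integerGrading σ k) S.deg).exists_minimalCover S.stabilizes
      (IsNoetherian.noetherian _)
  have hcol : (Matrix.of m).transpose.mulVecLin =
      Fintype.linearCombination (MvPolynomial σ k) m := by
    refine LinearMap.ext fun w => funext fun i => ?_
    simp [Matrix.vecMul, dotProduct, Fintype.linearCombination_apply]
  refine ⟨⟨b, E, LinearMap.ker (Fintype.linearCombination (MvPolynomial σ k) m), ?_⟩,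
    (Matrix.of m).transpose, fun i j => hmE j i, hcol ▸ hrange, by rw [hcol], hcol ▸ hmin⟩
  exact (twistedFreeProjections (integerGrading σ k) S.deg).stabilizes_ker fun j => by
    simpa using hmE j

theorem exists_minimalResolution [Finite σ] (T : SyzygyModule σ k) :
    ∃ (S : ℕ → SyzygyModule σ k)
      (A : ∀ i, Matrix (Fin (S i).rank) (Fin (S (i + 1)).rank) (MvPolynomial σ k)),
      S 0 = T ∧ ∀ i, (S i).IsMinimalPresentation (S (i + 1)) (A i) := by
  choose next A hA using exists_isMinimalPresentation (σ := σ) (k := k)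
  exact ⟨fun i => Nat.rec T (fun _ => next) i, fun _ => A _, rfl, fun _ => hA _⟩

lemma IsMinimalPresentation.map_single_mem [Finite σ] {S T : SyzygyModule σ k}
    {A : Matrix (Fin S.rank) (Fin T.rank) (MvPolynomial σ k)} (h : S.IsMinimalPresentation T A)
    (j : Fin T.rank) :
    A.mulVecLin (Pi.single j 1) ∈ twistedFree (integerGrading σ k) S.deg (T.deg j) := fun i => by
  simpa using h.entry_mem i j

variable [Fintype σ] [LinearOrder σ] {S T : SyzygyModule σ k}
  {A : Matrix (Fin S.rank) (Fin T.rank) (MvPolynomial σ k)}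

namespace IsMinimalPresentation

lemma koszulVanishes (h : S.IsMinimalPresentation T A) {c : ℕ} {p : ℤ}
    (hS : KoszulVanishes (X (σ := σ) (R := k)) S.grading (c + 1) (p - 1)) :
    KoszulVanishes (X (σ := σ) (R := k)) T.grading c p := by
  rw [grading, ← h.ker_eq]
  rw [grading, ← h.range_eq] at hS
  exact h.isMinimalCover.koszulVanishes_ker (twistedFreeProjections _ _) h.map_single_mem hS

lemma not_koszulVanishes_zero (h : S.IsMinimalPresentation T A) (j : Fin T.rank) :
    ¬ KoszulVanishes (X (σ := σ) (R := k)) S.grading 0 (T.deg j) := by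
  rw [grading, ← h.range_eq]
  exact h.isMinimalCover.not_koszulVanishes_zero (twistedFreeProjections _ _) h.map_single_mem j

end IsMinimalPresentation

theorem koszulVanishes_of_zero {S : ℕ → SyzygyModule σ k}
    {A : ∀ i, Matrix (Fin (S i).rank) (Fin (S (i + 1)).rank) (MvPolynomial σ k)}
    (hA : ∀ i, (S i).IsMinimalPresentation (S (i + 1)) (A i)) (i : ℕ) {c : ℕ} {p : ℤ}
    (h : KoszulVanishes (X (σ := σ) (R := k)) (S 0).grading (c + i) (p - i)) :
    KoszulVanishes (X (σ := σ) (R := k)) (S i).grading c p := by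
  induction i generalizing c p with
  | zero => simpa using h
  | succ i ih =>
    refine (hA i).koszulVanishes (ih ?_)
    convert h using 1 <;> omega

end SyzygyModule

end Syzygies

section Resolution

variable {k : Type*} [Field k] {n : ℕ} {I : Ideal (MvPolynomial (Fin n) k)}

lemma homogOfDeg_iff_mem_integerGrading {g : MvPolynomial (Fin n) k} {d : ℤ} :
    HomogOfDeg g d ↔ g ∈ integerGrading (Fin n) k d := by
  refine ⟨?_, fun hg => or_iff_not_imp_left.2 fun h0 => ?_⟩
  · rintro (rfl | ⟨m, rfl, hg⟩)
    exacts [zero_mem _, mem_integerGrading_natCast.2 hg]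
  · obtain ⟨a, ha⟩ := ne_zero_iff.1 h0
    obtain rfl := (weight_one_eq_natCast a).symm.trans (hg ha)
    exact ⟨_, rfl, mem_integerGrading_natCast.1 hg⟩

lemma IsHomogeneousIdeal.isHomogeneous (hI : IsHomogeneousIdeal I) :
    I.IsHomogeneous (integerGrading (Fin n) k) := by
  obtain ⟨T, hT, rfl⟩ := hI
  refine Ideal.homogeneous_span _ _ fun g hg => ?_
  obtain ⟨d, hd⟩ := hT g hg
  exact ⟨d, mem_integerGrading_natCast.2 hd⟩

/-- The map from the free module to `R ⧸ I` sending the basis to the classes of `v`. -/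
noncomputable def augmentation (I : Ideal (MvPolynomial (Fin n) k)) {β : Type*} [Fintype β]
    (v : β → MvPolynomial (Fin n) k) :
    (β → MvPolynomial (Fin n) k) →ₗ[MvPolynomial (Fin n) k] MvPolynomial (Fin n) k ⧸ I :=
  I.mkQ ∘ₗ Fintype.linearCombination (MvPolynomial (Fin n) k) v

lemma augmentation_single_mem {β : Type*} [Fintype β] [DecidableEq β] {E : β → ℤ}
    {v : β → MvPolynomial (Fin n) k} (hv : ∀ j, v j ∈ integerGrading (Fin n) k (E j)) (j : β) :
    augmentation I v (Pi.single j 1) ∈ quotientGrading (integerGrading (Fin n) k) I (E j) :=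
  mem_quotientGrading.2 ⟨v j, hv j, by simp [augmentation]⟩

lemma isKoszulRegular_bot {ι R M : Type*} [CommRing R] [AddCommGroup M] [Module R M] [Fintype ι]
    [LinearOrder ι] {x : ι → R} {G : ℤ → AddSubgroup M} {r : ℤ} :
    IsKoszulRegular x (inducedGrading (⊥ : Submodule R M) G) r := fun _ _ _ _ hz _ =>
  ⟨0, zero_mem _, (map_zero _).trans (funext fun S => (hz S).1.1.symm)⟩

lemma inducedGrading_range_of_surjective {R M N : Type*} [CommRing R] [AddCommGroup M]
    [Module R M] [AddCommGroup N] [Module R N] {φ : M →ₗ[R] N} (hφ : Function.Surjective φ)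
    (G : ℤ → AddSubgroup N) : inducedGrading (LinearMap.range φ) G = G := by
  rw [LinearMap.range_eq_top.2 hφ]
  exact funext fun p => top_inf_eq (G p)

theorem exists_minimal_augmentation (hI : I.IsHomogeneous (integerGrading (Fin n) k)) :
    ∃ (S : SyzygyModule (Fin n) k) (v : Fin S.rank → MvPolynomial (Fin n) k),
      (∀ j, v j ∈ integerGrading (Fin n) k (S.deg j)) ∧
      Function.Surjective (augmentation I v) ∧ LinearMap.ker (augmentation I v) = S.carrier ∧
      IsMinimalCover S.deg (augmentation I v) := by
  have P := quotientProjections hI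
  obtain ⟨b, E, m, hmE, hrange, hmin⟩ :=
    P.exists_minimalCover (N := ⊤) (fun _ _ _ => trivial) Module.Finite.fg_top
  choose v hv hvm using fun j => mem_quotientGrading.1 (hmE j)
  have haug : augmentation I v = Fintype.linearCombination (MvPolynomial (Fin n) k) m := by
    obtain rfl := funext hvm
    exact LinearMap.ext fun w => map_sum I.mkQ (fun j => w j • v j) Finset.univ
  rw [← haug] at hrange hmin
  exact ⟨⟨b, E, _, P.stabilizes_ker (augmentation_single_mem hv)⟩, v, hv,
    LinearMap.range_eq_top.1 hrange, rfl, hmin⟩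

/-- The minimal graded free resolution: a basis element of homological degree `i` and internal
degree `d` contributes to `Tor_i(R/I, k)_d`. -/
theorem exists_minimal_gradedFreeRes (hI : I.IsHomogeneous (integerGrading (Fin n) k)) :
    ∃ F : GradedFreeRes I, ∀ i j, ¬ KoszulVanishes (X (σ := Fin n) (R := k))
      (quotientGrading (integerGrading (Fin n) k) I) i (F.D i j - i) := by
  obtain ⟨T, v, hv, hsurj, hker, hmin⟩ := exists_minimal_augmentation hI
  obtain ⟨S, A, rfl, hA⟩ := T.exists_minimalResolution
  have P := quotientProjections hI
  have hφ := augmentation_single_mem (I := I) hv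
  have nonvanishing : ∀ i j, ¬ KoszulVanishes (X (σ := Fin n) (R := k))
      (quotientGrading (integerGrading (Fin n) k) I) i ((S i).deg j - i) := by
    rintro (_ | i) j h
    · refine hmin.not_koszulVanishes_zero P hφ j ?_
      rw [inducedGrading_range_of_surjective hsurj]
      simpa using h
    · refine (hA i).not_koszulVanishes_zero j (SyzygyModule.koszulVanishes_of_zero hA i ?_)
      rw [SyzygyModule.grading, ← hker]
      refine hmin.koszulVanishes_ker P hφ ?_
      rw [inducedGrading_range_of_surjective hsurj]
      convert h using 1 <;> omega
  refine ⟨{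
    len := n
    b := fun i => (S i).rank
    hb := fun i hi => ?_
    D := fun i => (S i).deg
    A := A
    v := v
    hv := fun j => homogOfDeg_iff_mem_integerGrading.2 (hv j)
    hA := fun i r c => homogOfDeg_iff_mem_integerGrading.2 ((hA i).entry_mem r c)
    haug := hsurj
    hex0 := LinearMap.exact_iff.2 (hker.trans (hA 0).range_eq.symm)
    hex := fun i => LinearMap.exact_iff.2 ((hA i).ker_eq.trans (hA (i + 1)).range_eq.symm) },
    nonvanishing⟩
  by_contra hrank
  exact nonvanishing i ⟨0, Nat.pos_of_ne_zero hrank⟩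
    (koszulVanishes_of_card_lt (by rwa [Fintype.card_fin]))

namespace GradedFreeRes

variable (F : GradedFreeRes I) {r : ℤ}

lemma exists_bound : ∃ r : ℤ, ∀ i j, F.D i j - i ≤ r := by
  obtain ⟨r, hr⟩ := (Set.finite_range fun s : Σ i : Fin (F.len + 1), Fin (F.b i) =>
    F.D s.1 s.2 - (s.1 : ℕ)).bddAbove
  refine ⟨r, fun i j => ?_⟩
  have hi : i < F.len + 1 := by
    by_contra! h
    exact (Fin.cast (F.hb i h) j).elim0
  exact hr ⟨⟨⟨i, hi⟩, j⟩, rfl⟩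

lemma mulVecLin_single_mem (i : ℕ) (j : Fin (F.b (i + 1))) :
    (F.A i).mulVecLin (Pi.single j 1) ∈
      twistedFree (integerGrading (Fin n) k) (F.D i) (F.D (i + 1) j) := fun r => by
  simpa using homogOfDeg_iff_mem_integerGrading.1 (F.hA i r j)

lemma ker_mulVecLin (i : ℕ) :
    LinearMap.ker (F.A i).mulVecLin = LinearMap.range (F.A (i + 1)).mulVecLin :=
  LinearMap.exact_iff.1 (F.hex i)

lemma ker_augmentation :
    LinearMap.ker (augmentation I F.v) = LinearMap.range (F.A 0).mulVecLin :=
  LinearMap.exact_iff.1 F.hex0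

/-- Downward induction on `i`, starting beyond the length of the resolution. -/
lemma isKoszulRegular_range (hr : ∀ i j, F.D i j - i ≤ r) {m i : ℕ} (hm : F.len ≤ i + m) :
    IsKoszulRegular (X (σ := Fin n) (R := k)) (inducedGrading (LinearMap.range (F.A i).mulVecLin)
      (twistedFree (integerGrading (Fin n) k) (F.D i))) (r + i + 1) := by
  induction m generalizing i with
  | zero =>
    have : IsEmpty (Fin (F.b (i + 1))) := by rw [F.hb _ (by omega)]; exact Fin.isEmpty'
    have hbot : LinearMap.range (F.A i).mulVecLin = ⊥ := by
      rw [LinearMap.range_eq_bot]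
      exact LinearMap.ext fun w => by rw [Subsingleton.elim w 0, map_zero, map_zero]
    rw [hbot]
    exact isKoszulRegular_bot
  | succ m ih =>
    refine (twistedFreeProjections _ (F.D i)).isKoszulRegular_range (F.mulVecLin_single_mem i)
      (fun j => ?_) ?_
    · have := hr (i + 1) j
      push_cast at this
      omega
    · rw [ker_mulVecLin]
      simpa [add_assoc] using ih (i := i + 1) (by omega)

theorem isRegularQuotient (hI : I.IsHomogeneous (integerGrading (Fin n) k))
    (hr : ∀ i j, F.D i j - i ≤ r) : IsRegularQuotient I r := by
  have hsurj : Function.Surjective (augmentation I F.v) := F.haug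
  rw [IsRegularQuotient, ← inducedGrading_range_of_surjective hsurj (quotientGrading _ I)]
  refine (quotientProjections hI).isKoszulRegular_range (augmentation_single_mem
    fun j => homogOfDeg_iff_mem_integerGrading.1 (F.hv j)) (fun j => by simpa using hr 0 j) ?_
  rw [ker_augmentation]
  simpa using F.isKoszulRegular_range hr (i := 0) (Nat.le_add_left _ _)

end GradedFreeRes

theorem exists_isRegularQuotient (hI : I.IsHomogeneous (integerGrading (Fin n) k)) :
    ∃ r, IsRegularQuotient I r := by
  obtain ⟨F, -⟩ := exists_minimal_gradedFreeRes hI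
  obtain ⟨r, hr⟩ := F.exists_bound
  exact ⟨r, F.isRegularQuotient hI hr⟩

theorem regQuot_eq_sInf (hI : I.IsHomogeneous (integerGrading (Fin n) k)) :
    regQuot I = sInf {r | IsRegularQuotient I r} := by
  refine congrArg sInf (Set.ext fun r => ⟨fun ⟨F, hF⟩ => F.isRegularQuotient hI hF, fun hr => ?_⟩)
  obtain ⟨F, hF⟩ := exists_minimal_gradedFreeRes hI
  exact ⟨F, fun i j => not_lt.1 fun hlt => hF i j (hr i _ hlt)⟩

end Resolution

lemma sInf_eq_sInf_add_one_or_eq {A B C : Set ℤ} (hAC : A ⊆ C) (hB : B.Nonempty)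
    (hAmono : IsUpperSet A) (hBmono : IsUpperSet B) (hCmono : IsUpperSet C)
    (hBA : ∀ r ∈ C, r - 1 ∈ B → r ∈ A) (hAB : ∀ r ∈ A, r - 1 ∈ C → r - 1 ∈ B) :
    sInf A = sInf B + 1 ∨ sInf A = sInf C := by
  refine or_iff_not_imp_right.2 fun hne => ?_
  obtain ⟨r₀, hr₀C, hr₀A⟩ := Set.not_subset.1 fun hCA => hne (congrArg sInf (hAC.antisymm hCA))
  have hlower : ∀ s ∈ B, r₀ ≤ s := fun s hs => by
    by_contra! hlt
    exact hr₀A (hBA r₀ hr₀C (hBmono (by omega) hs))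
  have hBbdd : BddBelow B := ⟨r₀, hlower⟩
  have hA : A = (OrderIso.addRight (1 : ℤ)) '' B := by
    refine Set.ext fun r => ⟨fun hr => ⟨r - 1, hAB r hr ?_, sub_add_cancel r 1⟩, ?_⟩
    · refine hCmono ?_ hr₀C
      by_contra! hlt
      exact hr₀A (hAmono (by omega) hr)
    · rintro ⟨s, hs, rfl⟩
      exact hBA (s + 1) (hCmono (by have := hlower s hs; omega) hr₀C) (by simpa using hs)
  rw [hA, ← (OrderIso.addRight (1 : ℤ)).map_csInf' hB hBbdd]
  rfl

section LinearForm

variable {σ k : Type*} [CommRing k] {I J H : Ideal (MvPolynomial σ k)} {f : MvPolynomial σ k}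
  {r : ℤ}

lemma exists_sum_C_mul_X_eq [Fintype σ] (hf : f ∈ integerGrading σ k 1) :
    ∃ a : σ → k, ∑ t, C (a t) * X t = f := by
  have hspan : f ∈ homogeneousSubmodule σ k 1 :=
    (mem_homogeneousSubmodule 1 f).2 (mem_integerGrading_natCast.1 hf)
  rw [homogeneousSubmodule_one_eq_span_X, Submodule.mem_span_range_iff_exists_fun] at hspan
  simpa only [smul_eq_C_mul] using hspan

lemma actsWithDegreeOne_quotientGrading (hI : I.IsHomogeneous (integerGrading σ k)) :
    ActsWithDegreeOne (X (σ := σ) (R := k)) (quotientGrading (integerGrading σ k) I) :=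
  (quotientProjections hI).actsWithDegreeOne X_mem_integerGrading

lemma isHomogeneous_sup_span_mul (hJ : J.IsHomogeneous (integerGrading σ k))
    (hH : H.IsHomogeneous (integerGrading σ k)) (hf : f ∈ integerGrading σ k 1) :
    (J ⊔ Ideal.span {f} * H).IsHomogeneous (integerGrading σ k) :=
  hJ.sup ((Ideal.homogeneous_span _ _ fun _ hg => ⟨1, hg ▸ hf⟩).mul hH)

variable [Fintype σ] [LinearOrder σ]

lemma isUpperSet_isRegularQuotient (I : Ideal (MvPolynomial σ k)) :
    IsUpperSet {r | IsRegularQuotient I r} :=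
  fun _ _ hrs hr => IsKoszulRegular.mono hr hrs

theorem IsRegularQuotient.of_le (h : IsRegularQuotient I r)
    (hJ : J.IsHomogeneous (integerGrading σ k)) (hf : f ∈ integerGrading σ k 1)
    (hreg : ∀ g, f * g ∈ J → g ∈ J) (hJI : J ≤ I) (hIJ : I ≤ J ⊔ Ideal.span {f}) :
    IsRegularQuotient J r := by
  intro c p hp
  obtain ⟨a, rfl⟩ := exists_sum_C_mul_X_eq hf
  refine (h c p hp).of_quotient (π := Submodule.factor hJI) (a := fun t => C (a t))
    (actsWithDegreeOne_quotientGrading hJ) (fun _ _ => factor_mem_quotientGrading hJI)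
    (fun _ _ => exists_quotientGrading_factor hJI) (fun p t m hm => ?_)
    ((isSMulRegular_quotient_iff_mem_of_smul_mem _ _).2 hreg)
    fun _ _ => exists_smul_eq_of_factor_eq_zero hJ hf hJI hIJ
  exact zero_add p ▸ (quotientProjections hJ).smul_mem (isWeightedHomogeneous_C 1 (a t)) hm

theorem IsRegularQuotient.sup_span (h : IsRegularQuotient J r)
    (hJ : J.IsHomogeneous (integerGrading σ k)) (hf : f ∈ integerGrading σ k 1)
    (hreg : ∀ g, f * g ∈ J → g ∈ J) : IsRegularQuotient (J ⊔ Ideal.span {f}) r := by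
  have hbot : J ⊔ Ideal.span {f} * ⊥ = J := by rw [Ideal.mul_bot, sup_bot_eq]
  refine (gradedShortExact_mul (H := ⊥) hJ hf hreg).isKoszulRegular_right
    (actsWithDegreeOne_quotientGrading (hbot.symm ▸ hJ)) (hbot.symm ▸ h)
    (isKoszulRegular_shift_iff.2 ?_)
  rwa [add_sub_cancel_right, sup_bot_eq]

theorem IsRegularQuotient.sup_span_mul (hJr : IsRegularQuotient J r)
    (hJHr : IsRegularQuotient (J ⊔ H) (r - 1)) (hJ : J.IsHomogeneous (integerGrading σ k))
    (hH : H.IsHomogeneous (integerGrading σ k)) (hf : f ∈ integerGrading σ k 1)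
    (hreg : ∀ g, f * g ∈ J → g ∈ J) : IsRegularQuotient (J ⊔ Ideal.span {f} * H) r :=
  (gradedShortExact_mul hJ hf hreg).isKoszulRegular_middle
    (actsWithDegreeOne_quotientGrading (isHomogeneous_sup_span_mul hJ hH hf))
    (isKoszulRegular_shift_iff.2 hJHr) (hJr.sup_span hJ hf hreg)

theorem IsRegularQuotient.sup_of_sup_span_mul
    (hIr : IsRegularQuotient (J ⊔ Ideal.span {f} * H) r) (hJr : IsRegularQuotient J (r - 1))
    (hJ : J.IsHomogeneous (integerGrading σ k)) (hH : H.IsHomogeneous (integerGrading σ k))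
    (hf : f ∈ integerGrading σ k 1) (hreg : ∀ g, f * g ∈ J → g ∈ J) :
    IsRegularQuotient (J ⊔ H) (r - 1) :=
  isKoszulRegular_shift_iff.1 <| (gradedShortExact_mul hJ hf hreg).isKoszulRegular_left
    (actsWithDegreeOne_quotientGrading (isHomogeneous_sup_span_mul hJ hH hf)) hIr
    (hJr.sup_span hJ hf hreg)

end LinearForm

/-- **Theorem (regularity modulo a linear form).** Let `I = J + fH` where `J, H` are
homogeneous ideals and `f` is a linear form which is a non-zerodivisor on `R/J`. Then
`reg R/I ∈ {reg R/(J+H) + 1, reg R/J}` (equivalently,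
`reg R/I ∈ {reg R/(I:f) + 1, reg R/(I,f)}`). -/
theorem reg_modulo_linear_form {k : Type*} [Field k] {n : ℕ}
    (J H : Ideal (MvPolynomial (Fin n) k))
    (hJ : IsHomogeneousIdeal J) (hH : IsHomogeneousIdeal H)
    (f : MvPolynomial (Fin n) k) (hf1 : f.IsHomogeneous 1) (hf0 : f ≠ 0)
    (hnzd : ∀ g : MvPolynomial (Fin n) k, f * g ∈ J → g ∈ J)
    (I : Ideal (MvPolynomial (Fin n) k)) (hI : I = J + Ideal.span {f} * H) :
    regQuot I = regQuot (J + H) + 1 ∨ regQuot I = regQuot J := by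
  subst hI
  have hJ' := hJ.isHomogeneous
  have hH' := hH.isHomogeneous
  have hf : f ∈ integerGrading (Fin n) k 1 := mem_integerGrading_natCast.2 hf1
  rw [Submodule.add_eq_sup, Submodule.add_eq_sup, regQuot_eq_sInf hJ',
    regQuot_eq_sInf (hJ'.sup hH'), regQuot_eq_sInf (isHomogeneous_sup_span_mul hJ' hH' hf)]
  exact sInf_eq_sInf_add_one_or_eq
    (fun r hIr => hIr.of_le hJ' hf hnzd le_sup_left (sup_le_sup_left Ideal.mul_le_left J))
    (exists_isRegularQuotient (hJ'.sup hH')) (isUpperSet_isRegularQuotient _)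
    (isUpperSet_isRegularQuotient _) (isUpperSet_isRegularQuotient _)
    (fun r hJr hJHr => hJr.sup_span_mul hJHr hJ' hH' hf hnzd)
    (fun r hIr hJr => hIr.sup_of_sup_span_mul hJr hJ' hH' hf hnzd)
end
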